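/- arXiv:math-ph/9903011 — 4 statements merged into one kernel-verified Lean document; each statement's English description precedes it below -/
import Mathlib

section
/- Let α ∈ (0,1) be irrational with continued fraction expansion α = [a_1,a_2,a_3,...], and suppose limsup_{n→∞} a_n = 1 (i.e., a_n = 1 for all sufficiently large n). Then for every λ ∈ ℝ with λ ≠ 0, every θ ∈ [0,1), and every E ∈ ℂ, the only square-summable function u : ℤ → ℂ satisfying u(n+1) + u(n−1) + λ v_{α,θ}(n) u(n) = E u(n) for all n ∈ ℤ is u ≡ 0. -/
/-!
The proof combines Gordon's two-block argument with the trace map, in terms of the rotation by `α`.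

Let `p n / q n` be the convergents far enough out that all partial quotients are `1`
(`GoldenTail`). The potential at `m` is `⌊(m+1)α + θ⌋ - ⌊mα + θ⌋`, so it repeats with period `q n`
at `m` unless translation by the error `q n * α - p n` carries `mα + θ` or `(m+1)α + θ` across an
integer (a *hit*). A window of `q n + 1` consecutive times without hits therefore produces a square
of period `q n`, and Cayley–Hamilton gives `u (i + 2q) + u i = x * u (i + q)` with `x` the trace of
the transfer matrix over one period (`gordon_of_no_hit`). That trace is always the trace `x n`
belonging to the characteristic word (`θ = 0`): sliding the window back to the previous hit only
conjugates the matrix, and right after a hit the next `q n` letters are characteristic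
(`trace_of_not_hit`). The traces obey `x (n+3) = x (n+2) x (n+1) - x n` (`trc_rec`).

The law of best approximation (`GoldenTail.best`) forces hits of neighbouring levels apart, and
hence every site is, up to a shift by one, the centre of a square (`exists_square_mid`) and the
start of a square (`exists_square_start`), for arbitrarily high levels. Shifts by one are harmless
since Gordon's identity concerns two neighbouring sites.

Let `u ≠ 0` be a square-summable solution. At a site where `|u|` is maximal, a centred square gives
`x u i = u (i + q) + u (i - q)`, hence `|x n| ≤ 2` for infinitely many `n`. By the escape property
of the trace map and its Fricke–Vogt invariant, the traces are then bounded (`trace_bounded`), and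
starting squares give `|u i| ≤ |u (i + 2q)| + C |u (i + q)| → 0` for each `i`, a contradiction.
-/

/-- Partial quotients of the continued fraction expansion of `α ∈ (0,1)`:
`cfa α n = a_n` for `n ≥ 1`, computed via the Gauss map. -/
noncomputable def cfa (α : ℝ) (n : ℕ) : ℕ :=
  ⌊((fun x : ℝ => Int.fract x⁻¹)^[n - 1] α)⁻¹⌋₊

/-- The standard Sturmian words, with index shifted by one:
`sw α (n+1)` is the word `s_n` of the paper (so `sw α 0 = s₋₁ = 1`, `sw α 1 = s₀ = 0`,
`sw α 2 = s₁ = s₀^(a₁-1) s₋₁`, and `s_n = s_{n-1}^{a_n} s_{n-2}` for `n ≥ 2`).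
The letter `1` is encoded by `true` and `0` by `false`. -/
noncomputable def sw (α : ℝ) : ℕ → List Bool
  | 0 => [true]
  | 1 => [false]
  | 2 => (List.replicate (cfa α 1 - 1) [false]).flatten ++ [true]
  | n + 3 => (List.replicate (cfa α (n + 2)) (sw α (n + 2))).flatten ++ sw α (n + 1)

/-- Denominators of the rational approximants: `q₀ = 1`, `q₁ = a₁`, `qₙ = aₙ q_{n-1} + q_{n-2}`. -/
noncomputable def qden (α : ℝ) : ℕ → ℕ
  | 0 => 1
  | 1 => cfa α 1
  | n + 2 => cfa α (n + 2) * qden α (n + 1) + qden α n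

open scoped Classical in
/-- The Sturmian potential `v_{α,θ}(n) = χ_{[1-α,1)}(nα + θ mod 1)`, with value `1`
encoded by `true` and `0` by `false` (note `Int.fract x < 1` always). -/
noncomputable def sturmian (α θ : ℝ) (n : ℤ) : Bool :=
  if 1 - α ≤ Int.fract ((n : ℝ) * α + θ) then true else false

/-- An `(n,α)`-partition of a two-sided sequence `f : ℤ → Bool`, given by the
break points `d : ℤ → ℤ` (interval `I_j = {d j, …, d (j+1) - 1}`) and blocks
`z : ℤ → List Bool`: the `d j` are strictly increasing, `0 ∈ I₀`, each block is
`s_n = sw α (n+1)` or `s_{n-1} = sw α n`, consecutive intervals are adjacent with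
`I_j` of length `(z j).length`, and `f` restricted to `I_j` spells the word `z j`. -/
def IsNPartition (α : ℝ) (n : ℕ) (f : ℤ → Bool) (d : ℤ → ℤ) (z : ℤ → List Bool) : Prop :=
  StrictMono d ∧
  (d 0 ≤ 0 ∧ 0 < d 1) ∧
  (∀ j : ℤ, z j = sw α (n + 1) ∨ z j = sw α n) ∧
  (∀ j : ℤ, d (j + 1) = d j + (z j).length) ∧
  (∀ j : ℤ, z j = (List.range (z j).length).map fun k => f (d j + (k : ℤ)))

/-- The finite word `x` occurs in the two-sided sequence `v` adjacent to `i`: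
either `x = v_i v_{i+1} … v_{i+l-1}` or `x = v_{i-l+1} … v_{i-1} v_i`. -/
def AdjacentTo (v : ℤ → Bool) (x : List Bool) (i : ℤ) : Prop :=
  x = ((List.range x.length).map fun k => v (i + (k : ℤ))) ∨
  x = ((List.range x.length).map fun k => v (i - (x.length : ℤ) + 1 + (k : ℤ)))

open Matrix

/-! ### Transfer matrices and Gordon's identity -/

/-- The one-step transfer matrix at energy `E` and potential value `c`: it maps
`(u m, u (m-1))` to `(u (m+1), u m)`. -/
noncomputable def stepMat (E c : ℂ) : Matrix (Fin 2) (Fin 2) ℂ := !![E - c, -1; 1, 0]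

/-- The transfer matrix over the `q` sites `j, …, j + q - 1` for the potential `w`. -/
noncomputable def transfer (E : ℂ) (w : ℤ → ℂ) (j : ℤ) : ℕ → Matrix (Fin 2) (Fin 2) ℂ
  | 0 => 1
  | q + 1 => stepMat E (w (j + q)) * transfer E w j q

lemma transfer_congr (E : ℂ) (w w' : ℤ → ℂ) (j j' : ℤ) (q : ℕ)
    (h : ∀ m : ℕ, m < q → w (j + m) = w' (j' + m)) :
    transfer E w j q = transfer E w' j' q := by
  induction q with
  | zero => rfl
  | succ q ih =>
    simp only [transfer]
    rw [ih (fun m hm => h m (by omega)), h q (by omega)]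

lemma transfer_add (E : ℂ) (w : ℤ → ℂ) (j : ℤ) (a b : ℕ) :
    transfer E w j (a + b) = transfer E w (j + a) b * transfer E w j a := by
  induction b with
  | zero => simp [transfer]
  | succ b ih =>
    rw [← add_assoc]
    simp only [transfer]
    rw [ih, Matrix.mul_assoc]
    push_cast
    rw [add_assoc]

lemma transfer_det (E : ℂ) (w : ℤ → ℂ) (j : ℤ) (q : ℕ) : (transfer E w j q).det = 1 := by
  induction q with
  | zero => simp [transfer]
  | succ q ih =>
    rw [transfer, Matrix.det_mul, ih]
    simp [stepMat, Matrix.det_fin_two]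

/-- If the potential repeats with period `q` at site `j`, the windows of length `q` starting
at `j` and `j + 1` are cyclic rotations of each other. -/
lemma trace_transfer_slide (E : ℂ) (w : ℤ → ℂ) (j : ℤ) (q : ℕ) (h : w (j + q) = w j) :
    (transfer E w (j + 1) q).trace = (transfer E w j q).trace := by
  have h1 : transfer E w j (q + 1) = transfer E w (j + 1) q * stepMat E (w j) := by
    rw [add_comm q 1, transfer_add]
    simp [transfer]
  have h2 : transfer E w j (q + 1) = stepMat E (w j) * transfer E w j q := by
    simp only [transfer, h]
  have hdet : (stepMat E (w j)).det = 1 := by simp [stepMat, Matrix.det_fin_two]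
  have hu : IsUnit (stepMat E (w j)).det := by rw [hdet]; exact isUnit_one
  have h3 : transfer E w (j + 1) q
      = stepMat E (w j) * transfer E w j q * (stepMat E (w j))⁻¹ := by
    rw [← h2, h1, Matrix.mul_assoc, Matrix.mul_nonsing_inv _ hu, Matrix.mul_one]
  rw [h3, Matrix.mul_assoc, Matrix.trace_mul_comm, Matrix.mul_assoc,
    Matrix.nonsing_inv_mul _ hu, Matrix.mul_one]

lemma transfer_apply (E : ℂ) (w u : ℤ → ℂ)
    (heq : ∀ n : ℤ, u (n + 1) + u (n - 1) + w n * u n = E * u n) (j : ℤ) (q : ℕ) :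
    ![u (j + q), u (j + q - 1)] = transfer E w j q *ᵥ ![u j, u (j - 1)] := by
  induction q with
  | zero => simp [transfer]
  | succ q ih =>
    simp only [transfer]
    rw [← Matrix.mulVec_mulVec, ← ih]
    have h := heq (j + q)
    ext i
    fin_cases i
    · simp [stepMat, Matrix.mulVec, dotProduct, Fin.sum_univ_two]
      rw [← add_assoc]
      linear_combination h
    · simp [stepMat, Matrix.mulVec, dotProduct, Fin.sum_univ_two]
      congr 1
      ring

/-- Gordon's two-block identity: over a square of period `q`, Cayley–Hamilton for the
unimodular block matrix relates the solution at three sites spaced by `q`. -/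
lemma gordon (E : ℂ) (w u : ℤ → ℂ)
    (heq : ∀ n : ℤ, u (n + 1) + u (n - 1) + w n * u n = E * u n) (j : ℤ) (q : ℕ)
    (hsq : ∀ m : ℕ, m < q → w (j + q + m) = w (j + m)) :
    u (j + 2 * q) + u j = (transfer E w j q).trace * u (j + q) ∧
    u (j - 1 + 2 * q) + u (j - 1) = (transfer E w j q).trace * u (j - 1 + q) := by
  have h1 := transfer_apply E w u heq j q
  have h2 := transfer_apply E w u heq (j + q) q
  rw [transfer_congr E w w (j + q) j q hsq] at h2
  have hdet := transfer_det E w j q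
  rw [Matrix.det_fin_two] at hdet
  set A := transfer E w j q
  have e10 := congrFun h1 0
  have e11 := congrFun h1 1
  have e20 := congrFun h2 0
  have e21 := congrFun h2 1
  simp [Matrix.mulVec, dotProduct, Fin.sum_univ_two] at e10 e11 e20 e21
  rw [Matrix.trace_fin_two]
  have a1 : j + 2 * (q : ℤ) = j + q + q := by ring
  have a2 : j - 1 + 2 * (q : ℤ) = j + q + q - 1 := by ring
  have a3 : j - 1 + (q : ℤ) = j + q - 1 := by ring
  rw [a1, a2, a3, e20, e21, e10, e11]
  constructor
  · linear_combination (-u j) * hdet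
  · linear_combination (-u (j - 1)) * hdet

/-! ### The trace map -/

/-- The trace recursion for unimodular matrices with `A₂ = A₀ A₁` and `A₃ = A₁ A₂`. -/
lemma trace_recursion (A₀ A₁ : Matrix (Fin 2) (Fin 2) ℂ)
    (h1 : A₁.det = 1) :
    (A₁ * (A₀ * A₁)).trace = (A₀ * A₁).trace * A₁.trace - A₀.trace := by
  rw [Matrix.det_fin_two] at h1
  simp only [Matrix.trace_fin_two, Matrix.mul_apply, Fin.sum_univ_two]
  linear_combination (-(A₀ 0 0) - A₀ 1 1) * h1

/-- If the traces have modulus at most `2` again and again, they form a bounded sequence: two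
consecutive large traces, the later exceeding the one before the pair, escape for good, so
beyond a small trace large ones are isolated, and the Fricke–Vogt invariant bounds those. -/
lemma trace_bounded (x : ℕ → ℂ) (hrec : ∀ n, x (n + 3) = x (n + 2) * x (n + 1) - x n)
    (hfreq : ∀ N, ∃ n, N ≤ n ∧ ‖x n‖ ≤ 2) :
    ∃ C : ℝ, ∃ N, ∀ n, N ≤ n → ‖x n‖ ≤ C := by
  have hesc : ∀ n, 2 < ‖x (n + 1)‖ → 2 < ‖x (n + 2)‖ → ‖x n‖ < ‖x (n + 2)‖ → False := by
    intro n h1 h2 h3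
    have key : ∀ k, 2 < ‖x (n + k + 1)‖ ∧ 2 < ‖x (n + k + 2)‖ ∧
        ‖x (n + k)‖ < ‖x (n + k + 2)‖ := by
      intro k
      induction k with
      | zero => exact ⟨h1, h2, h3⟩
      | succ k ih =>
        obtain ⟨a, b, c⟩ := ih
        have hr := hrec (n + k)
        have hn : ‖x (n + k + 2)‖ * ‖x (n + k + 1)‖ - ‖x (n + k)‖ ≤ ‖x (n + k + 3)‖ := by
          rw [hr, ← norm_mul]
          exact norm_sub_norm_le _ _
        have hb : 2 < ‖x (n + k + 3)‖ := by nlinarith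
        have hc : ‖x (n + k + 1)‖ < ‖x (n + k + 3)‖ := by nlinarith
        refine ⟨?_, ?_, ?_⟩
        · convert b using 3
          ring
        · convert hb using 3
          ring
        · convert hc using 3 <;> ring
    obtain ⟨m, hm, hx⟩ := hfreq (n + 1)
    have := (key (m - n - 1)).1
    rw [show n + (m - n - 1) + 1 = m by omega] at this
    linarith
  obtain ⟨m, -, hm⟩ := hfreq 0
  -- beyond `m`, one of two consecutive traces is small
  have hpair : ∀ k, ‖x (m + k)‖ ≤ 2 ∨ ‖x (m + k + 1)‖ ≤ 2 := by
    intro k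
    induction k with
    | zero => exact Or.inl hm
    | succ k ih =>
      by_contra! hcon
      obtain ⟨h1, h2⟩ := hcon
      have h1' : 2 < ‖x (m + k + 1)‖ := h1
      have h2' : 2 < ‖x (m + k + 2)‖ := h2
      rcases ih with h | h
      · exact hesc (m + k) h1' h2' (by linarith)
      · linarith
  set I : ℂ := x 2 ^ 2 + x 1 ^ 2 + x 0 ^ 2 - x 2 * x 1 * x 0 with hI
  have hinv : ∀ n, x (n + 2) ^ 2 + x (n + 1) ^ 2 + x n ^ 2 - x (n + 2) * x (n + 1) * x n = I := by
    intro n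
    induction n with
    | zero => exact hI.symm
    | succ n ih =>
      rw [← ih]
      have hr : x (n + 1 + 2) = x (n + 2) * x (n + 1) - x n := hrec n
      rw [hr, show n + 1 + 1 = n + 2 from rfl]
      ring
  refine ⟨‖I‖ + 14, m + 1, fun n hn => ?_⟩
  obtain ⟨k, rfl⟩ : ∃ k, n = m + k + 1 := ⟨n - m - 1, by omega⟩
  by_cases hbig : ‖x (m + k + 1)‖ ≤ 2
  · have := norm_nonneg I
    linarith
  have ha : ‖x (m + k)‖ ≤ 2 := (hpair k).resolve_right hbig
  have hc : ‖x (m + k + 2)‖ ≤ 2 := (hpair (k + 1)).resolve_left hbig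
  set a := x (m + k)
  set b := x (m + k + 1)
  set c := x (m + k + 2)
  have hb : b ^ 2 = I - c ^ 2 - a ^ 2 + c * b * a := by
    rw [← hinv (m + k)]
    ring
  have hnb : ‖b‖ ^ 2 ≤ ‖I‖ + ‖c‖ ^ 2 + ‖a‖ ^ 2 + ‖c‖ * ‖b‖ * ‖a‖ := by
    rw [← norm_pow, hb, ← norm_pow, ← norm_pow, ← norm_mul, ← norm_mul]
    exact (norm_add_le _ _).trans (add_le_add_left ((norm_sub_le _ _).trans
      (add_le_add_left (norm_sub_le _ _) _)) _)
  have := norm_nonneg I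
  have hcb : ‖c‖ * ‖b‖ * ‖a‖ ≤ 4 * ‖b‖ := by
    have : ‖c‖ * ‖a‖ ≤ 2 * 2 := mul_le_mul hc ha (norm_nonneg _) (by norm_num)
    nlinarith [norm_nonneg b]
  have ha2 : ‖a‖ ^ 2 ≤ 4 := by nlinarith [norm_nonneg a]
  have hc2 : ‖c‖ ^ 2 ≤ 4 := by nlinarith [norm_nonneg c]
  by_contra! hcon
  nlinarith

/-! ### Arithmetic of the approximants -/

/-- A tail `p n / q n` of the convergents of `α` along which all partial quotients equal `1`,
shifted so that `q n * α - p n` is negative exactly for even `n` and the denominators are not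
too small. -/
structure GoldenTail (α : ℝ) (q : ℕ → ℕ) (p : ℕ → ℤ) : Prop where
  q_rec : ∀ n, q (n + 2) = q (n + 1) + q n
  p_rec : ∀ n, p (n + 2) = p (n + 1) + p n
  det : ∀ n, (q n * p (n + 1) - q (n + 1) * p n : ℤ) = 1 ∨
    (q n * p (n + 1) - q (n + 1) * p n : ℤ) = -1
  q_zero : 3 ≤ q 0
  q_one : q 0 + 2 ≤ q 1
  neg : ∀ n, q (2 * n) * α - p (2 * n) < 0
  pos : ∀ n, 0 < q (2 * n + 1) * α - p (2 * n + 1)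

namespace GoldenTail

variable {α : ℝ} {q : ℕ → ℕ} {p : ℕ → ℤ}

lemma d_rec (h : GoldenTail α q p) (n : ℕ) :
    q (n + 2) * α - p (n + 2) = (q (n + 1) * α - p (n + 1)) + (q n * α - p n) := by
  rw [h.q_rec, h.p_rec]
  push_cast
  ring

lemma q_lt (h : GoldenTail α q p) (n : ℕ) : 3 ≤ q n ∧ q n + 2 ≤ q (n + 1) := by
  induction n with
  | zero => exact ⟨h.q_zero, h.q_one⟩
  | succ n ih =>
    have h1 := h.q_rec n
    change 3 ≤ q (n + 1) ∧ q (n + 1) + 2 ≤ q (n + 2)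
    omega

lemma le_q (h : GoldenTail α q p) (n : ℕ) : n ≤ q n := by
  induction n with
  | zero => omega
  | succ n ih => have := h.q_lt n; omega

lemma d_mul_neg (h : GoldenTail α q p) (n : ℕ) :
    (q n * α - p n) * (q (n + 1) * α - p (n + 1)) < 0 := by
  rcases Nat.even_or_odd' n with ⟨k, rfl | rfl⟩
  · exact mul_neg_of_neg_of_pos (h.neg k) (h.pos k)
  · exact mul_neg_of_pos_of_neg (h.pos k) (h.neg (k + 1))

lemma d_anti (h : GoldenTail α q p) (n : ℕ) :
    |q (n + 1) * α - p (n + 1)| < |q n * α - p n| := by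
  have h1 := h.d_rec n
  rcases Nat.even_or_odd' n with ⟨k, rfl | rfl⟩
  · have a := h.neg k
    have b := h.pos k
    have c : q (2 * k + 2) * α - p (2 * k + 2) < 0 := h.neg (k + 1)
    rw [abs_of_neg a, abs_of_pos b]
    linarith
  · have a := h.pos k
    have b : q (2 * k + 1 + 1) * α - p (2 * k + 1 + 1) < 0 := h.neg (k + 1)
    have c : 0 < q (2 * k + 1 + 2) * α - p (2 * k + 1 + 2) := h.pos (k + 1)
    rw [abs_of_pos a, abs_of_neg b]
    linarith

/-- Law of best approximation: expanding `(k, s)` in the lattice basis formed by two consecutive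
convergents, an approximation better than the `n`-th one with `|k| ≤ q (n + 1)` is trivial or
`±` the `(n+1)`-st. -/
lemma best (h : GoldenTail α q p) (n : ℕ) (k s : ℤ) (hk : |k| ≤ q (n + 1))
    (hs : |k * α - s| < |q n * α - p n|) :
    (k = 0 ∧ s = 0) ∨ (k = q (n + 1) ∧ s = p (n + 1)) ∨
      (k = -q (n + 1) ∧ s = -p (n + 1)) := by
  obtain ⟨a, b, hka, hsb⟩ : ∃ a b : ℤ, k = a * q n + b * q (n + 1) ∧
      s = a * p n + b * p (n + 1) := by
    rcases h.det n with hd | hd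
    · exact ⟨k * p (n + 1) - s * q (n + 1), s * q n - k * p n,
        by linear_combination (-k) * hd, by linear_combination (-s) * hd⟩
    · exact ⟨-(k * p (n + 1) - s * q (n + 1)), -(s * q n - k * p n),
        by linear_combination k * hd, by linear_combination s * hd⟩
  have hq := h.q_lt n
  have hneg := h.d_mul_neg n
  set d := (q n * α - p n : ℝ)
  set d' := (q (n + 1) * α - p (n + 1) : ℝ)
  have hval : (k * α - s : ℝ) = a * d + b * d' := by
    rw [hka, hsb]
    push_cast
    ring
  rw [hval] at hs
  obtain ⟨hk1, hk2⟩ := abs_le.mp hk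
  have hq0 : (3 : ℤ) ≤ q n := by exact_mod_cast hq.1
  have hq1 : (q n : ℤ) + 2 ≤ q (n + 1) := by exact_mod_cast hq.2
  by_cases ha : a = 0
  · subst ha
    have hb1 : -1 ≤ b := by nlinarith
    have hb2 : b ≤ 1 := by nlinarith
    have : b = -1 ∨ b = 0 ∨ b = 1 := by omega
    rcases this with rfl | rfl | rfl
    · right; right; constructor <;> linarith
    · left; constructor <;> linarith
    · right; left; constructor <;> linarith
  exfalso
  -- with coefficients of opposite signs the errors add up
  have hopp : a * b ≤ 0 → False := by
    intro hab
    have hab' : (a : ℝ) * b ≤ 0 := by exact_mod_cast hab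
    have ha1 : (1 : ℝ) ≤ (a : ℝ) ^ 2 := by
      have : 0 < a ^ 2 := by positivity
      exact_mod_cast this
    have h2 := sq_lt_sq.mpr hs
    have h3 : 0 ≤ (a * b : ℝ) * (d * d') := mul_nonneg_of_nonpos_of_nonpos hab' hneg.le
    nlinarith [sq_nonneg (b * d'), mul_le_mul_of_nonneg_right ha1 (sq_nonneg d)]
  rcases lt_or_gt_of_ne ha with ha | ha
  · have hb : b < 0 := by
      by_contra! hb
      exact hopp (mul_nonpos_of_nonpos_of_nonneg ha.le hb)
    nlinarith
  · have hb : 0 < b := by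
      by_contra! hb
      exact hopp (mul_nonpos_of_nonneg_of_nonpos ha.le hb)
    nlinarith

end GoldenTail

/-- Consecutive convergents to `α`, with the ratio of the errors given by the Gauss map orbit. -/
lemma exists_convergents (α : ℝ) (hα0 : 0 < α) (hα1 : α < 1) (hirr : Irrational α) (n : ℕ) :
    (Irrational ((fun x : ℝ => Int.fract x⁻¹)^[n] α) ∧
      0 < (fun x : ℝ => Int.fract x⁻¹)^[n] α ∧ (fun x : ℝ => Int.fract x⁻¹)^[n] α < 1) ∧
    ∃ q q' : ℕ, ∃ p p' : ℤ, 1 ≤ q' ∧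
      ((q * p' - q' * p : ℤ) = 1 ∨ (q * p' - q' * p : ℤ) = -1) ∧
      (q * α - p : ℝ) ≠ 0 ∧
      (q' * α - p' : ℝ) = -((fun x : ℝ => Int.fract x⁻¹)^[n] α) * (q * α - p) := by
  induction n with
  | zero =>
    refine ⟨⟨hirr, hα0, hα1⟩, 0, 1, 1, 0, le_rfl, ?_, ?_, ?_⟩ <;> simp
  | succ n ih =>
    obtain ⟨⟨hg, hg0, hg1⟩, q, q', p, p', hq', hdet, hd0, hd⟩ := ih
    rw [Function.iterate_succ_apply']
    set g := (fun x : ℝ => Int.fract x⁻¹)^[n] α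
    have hirr' : Irrational (Int.fract g⁻¹) := by
      rw [Int.fract]
      exact (irrational_inv_iff.mpr hg).sub_intCast _
    have hfl : (1 : ℤ) ≤ ⌊g⁻¹⌋ := by
      rw [Int.le_floor]
      push_cast
      exact (one_lt_inv₀ hg0).mpr hg1 |>.le
    refine ⟨⟨hirr', lt_of_le_of_ne (Int.fract_nonneg _) (Ne.symm hirr'.ne_zero),
      Int.fract_lt_one _⟩, q', ⌊g⁻¹⌋.toNat * q' + q, p', ⌊g⁻¹⌋ * p' + p, ?_, ?_, ?_, ?_⟩
    · have : 1 ≤ ⌊g⁻¹⌋.toNat := by omega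
      nlinarith
    · have : (⌊g⁻¹⌋.toNat : ℤ) = ⌊g⁻¹⌋ := Int.toNat_of_nonneg (by omega)
      push_cast [this]
      rcases hdet with h | h
      · right; linear_combination -h
      · left; linear_combination -h
    · rw [hd]
      exact mul_ne_zero (neg_ne_zero.mpr hg0.ne') hd0
    · have : ((⌊g⁻¹⌋.toNat : ℕ) : ℝ) = (⌊g⁻¹⌋ : ℝ) := by
        have : (⌊g⁻¹⌋.toNat : ℤ) = ⌊g⁻¹⌋ := Int.toNat_of_nonneg (by omega)
        exact_mod_cast congrArg (Int.cast : ℤ → ℝ) this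
      push_cast [this]
      have hgg : g⁻¹ * g = 1 := inv_mul_cancel₀ hg0.ne'
      rw [Int.fract]
      linear_combination g⁻¹ * hd - (q * α - p) * hgg

/-- The sequence with the Fibonacci recursion and initial values `a`, `b`. -/
def fibSeq {R : Type*} [Add R] (a b : R) : ℕ → R
  | 0 => a
  | 1 => b
  | n + 2 => fibSeq a b (n + 1) + fibSeq a b n

lemma exists_goldenTail (α : ℝ) (hα0 : 0 < α) (hα1 : α < 1) (hirr : Irrational α)
    (hlim : Filter.atTop.limsup (fun n : ℕ => (cfa α n : ℕ∞)) = 1) :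
    ∃ q p, GoldenTail α q p := by
  obtain ⟨N, hN⟩ : ∃ N, ∀ n, N ≤ n → cfa α n < 2 := by
    have h2 : Filter.atTop.limsup (fun n : ℕ => (cfa α n : ℕ∞)) < 2 := by
      rw [hlim]
      norm_num
    have := Filter.eventually_lt_of_limsup_lt h2
    obtain ⟨N, hN⟩ := Filter.eventually_atTop.mp this
    exact ⟨N, fun n hn => by exact_mod_cast hN n hn⟩
  set g : ℕ → ℝ := fun n => (fun x : ℝ => Int.fract x⁻¹)^[n] α with hgdef
  have hg : ∀ n, 0 < g n ∧ g n < 1 := fun n => (exists_convergents α hα0 hα1 hirr n).1.2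
  have hstep : ∀ n, N ≤ n → g (n + 1) = (g n)⁻¹ - 1 := by
    intro n hn
    have h1 := hN (n + 1) (by omega)
    have h2 : ⌊(g n)⁻¹⌋₊ < 2 := h1
    have h3 : 1 ≤ ⌊(g n)⁻¹⌋₊ := by
      rw [Nat.one_le_floor_iff]
      exact ((one_lt_inv₀ (hg n).1).mpr (hg n).2).le
    have h4 : ⌊(g n)⁻¹⌋ = 1 := by
      have := Int.natCast_floor_eq_floor (inv_nonneg.mpr (hg n).1.le)
      omega
    have h5 : g (n + 1) = Int.fract (g n)⁻¹ := by
      simp only [hgdef]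
      rw [Function.iterate_succ_apply']
    rw [h5, Int.fract, h4]
    norm_num
  obtain ⟨-, q₀, q₁, p₀, p₁, hq1, hdet, hd0, hd⟩ := exists_convergents α hα0 hα1 hirr N
  set Q : ℕ → ℕ := fibSeq q₀ q₁
  set P : ℕ → ℤ := fibSeq p₀ p₁
  have hQ : ∀ n, Q (n + 2) = Q (n + 1) + Q n := fun n => rfl
  have hP : ∀ n, P (n + 2) = P (n + 1) + P n := fun n => rfl
  have hD : ∀ n, (Q (n + 1) * α - P (n + 1) : ℝ) = -g (N + n) * (Q n * α - P n) := by
    intro n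
    induction n with
    | zero => exact hd
    | succ n ih =>
      have h1 := hstep (N + n) (by omega)
      have hgg : (g (N + n))⁻¹ * g (N + n) = 1 := inv_mul_cancel₀ (hg _).1.ne'
      rw [← add_assoc N n 1, h1, hQ, hP]
      push_cast
      linear_combination (g (N + n))⁻¹ * ih - (Q n * α - P n) * hgg
  have hD0 : ∀ n, (Q n * α - P n : ℝ) ≠ 0 := by
    intro n
    induction n with
    | zero => exact hd0
    | succ n ih =>
      rw [hD]
      exact mul_ne_zero (neg_ne_zero.mpr (hg _).1.ne') ih
  have hdetn : ∀ n, (Q n * P (n + 1) - Q (n + 1) * P n : ℤ) = 1 ∨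
      (Q n * P (n + 1) - Q (n + 1) * P n : ℤ) = -1 := by
    intro n
    induction n with
    | zero => exact hdet
    | succ n ih =>
      rw [hQ, hP]
      push_cast
      rcases ih with h | h
      · right; linear_combination -h
      · left; linear_combination -h
  -- shifting by `s` makes the denominators large; the parity of `s` fixes the signs
  have main : ∀ s, 5 ≤ s → (Q s * α - P s : ℝ) < 0 →
      GoldenTail α (fun n => Q (s + n)) (fun n => P (s + n)) := by
    intro s hs hneg
    have hsgn : ∀ n, (Q (s + 2 * n) * α - P (s + 2 * n) : ℝ) < 0 := by
      intro n
      induction n with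
      | zero => exact hneg
      | succ n ih =>
        have h1 := hD (s + 2 * n)
        have h2 := hD (s + 2 * n + 1)
        rw [h1] at h2
        have : (Q (s + 2 * (n + 1)) * α - P (s + 2 * (n + 1)) : ℝ) =
          -g (N + (s + 2 * n + 1)) * (-g (N + (s + 2 * n)) *
            (Q (s + 2 * n) * α - P (s + 2 * n))) := h2
        rw [this]
        have := mul_pos (hg (N + (s + 2 * n + 1))).1 (hg (N + (s + 2 * n))).1
        nlinarith
    have hQs : ∀ n, 3 ≤ Q (5 + n) ∧ Q (5 + n) + 2 ≤ Q (5 + n + 1) := by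
      intro n
      induction n with
      | zero =>
        have e1 : 1 ≤ Q 1 := hq1
        have := hQ 0; have := hQ 1; have := hQ 2; have := hQ 3; have := hQ 4
        simp only [Nat.reduceAdd, add_zero] at *
        omega
      | succ n ih =>
        have h1 := hQ (5 + n)
        change 3 ≤ Q (5 + n + 1) ∧ Q (5 + n + 1) + 2 ≤ Q (5 + n + 2)
        omega
    obtain ⟨r, rfl⟩ : ∃ r, s = 5 + r := ⟨s - 5, by omega⟩
    exact
      { q_rec := fun n => hQ (5 + r + n)
        p_rec := fun n => hP (5 + r + n)
        det := fun n => hdetn (5 + r + n)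
        q_zero := (hQs r).1
        q_one := (hQs r).2
        neg := hsgn
        pos := fun n => by
          have h1 := hD (5 + r + 2 * n)
          have h2 := hsgn n
          have : (Q (5 + r + (2 * n + 1)) * α - P (5 + r + (2 * n + 1)) : ℝ) =
            -g (N + (5 + r + 2 * n)) * (Q (5 + r + 2 * n) * α - P (5 + r + 2 * n)) := h1
          rw [this]
          have := (hg (N + (5 + r + 2 * n))).1
          nlinarith }
  rcases lt_or_gt_of_ne (hD0 5) with h | h
  · exact ⟨_, _, main 5 le_rfl h⟩
  · refine ⟨_, _, main 6 (by norm_num) ?_⟩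
    rw [hD 5]
    have := (hg (N + 5)).1
    nlinarith

/-! ### Repetitions in the Sturmian potential -/

/-- Translation by `d` moves the point `y` across an integer. For `d = q α - p` this is the only
way in which `⌊· + q α⌋` can differ from `⌊·⌋ + p`. -/
def Crosses (d y : ℝ) : Prop := ⌊y + d⌋ ≠ ⌊y⌋

lemma Crosses.of_neg {d y : ℝ} (h : Crosses d y) (hd : d < 0) :
    ∃ r : ℤ, 0 ≤ y - r ∧ y - r < -d := by
  refine ⟨⌊y⌋, by linarith [Int.floor_le y], ?_⟩
  by_contra! hcon
  apply h
  rw [Int.floor_eq_iff]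
  constructor <;> linarith [Int.lt_floor_add_one y]

lemma Crosses.of_pos {d y : ℝ} (h : Crosses d y) (hd : 0 < d) :
    ∃ r : ℤ, -d ≤ y - r ∧ y - r < 0 := by
  refine ⟨⌊y⌋ + 1, ?_, ?_⟩
  · by_contra! hcon
    apply h
    push_cast at hcon
    rw [Int.floor_eq_iff]
    constructor <;> linarith [Int.floor_le y]
  · push_cast
    linarith [Int.lt_floor_add_one y]

lemma Crosses.exists_int {d y : ℝ} (h : Crosses d y) :
    ∃ r : ℤ, -|d| ≤ y - r ∧ y - r < |d| := by
  rcases lt_trichotomy d 0 with hd | hd | hd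
  · obtain ⟨r, h1, h2⟩ := h.of_neg hd
    rw [abs_of_neg hd]
    exact ⟨r, by linarith, h2⟩
  · subst hd
    exact absurd (by simp) h
  · rw [abs_of_pos hd] at *
    obtain ⟨r, h1, h2⟩ := h.of_pos hd
    exact ⟨r, h1, by linarith⟩

/-- The Sturmian potential `lam · v`, written as the difference of consecutive floors. -/
noncomputable def pot (lam : ℂ) (α θ : ℝ) (m : ℤ) : ℂ :=
  lam * ((⌊((m + 1 : ℤ) : ℝ) * α + θ⌋ - ⌊(m : ℝ) * α + θ⌋ : ℤ) : ℂ)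

lemma pot_eq (lam : ℂ) (α θ : ℝ) (hα0 : 0 < α) (hα1 : α < 1) (m : ℤ) :
    lam * (if sturmian α θ m then 1 else 0) = pot lam α θ m := by
  unfold pot
  congr 1
  set y := (m : ℝ) * α + θ with hy
  have hy' : ((m + 1 : ℤ) : ℝ) * α + θ = y + α := by
    push_cast
    ring
  have h1 := Int.floor_add_fract y
  have h2 := Int.fract_nonneg y
  have h3 := Int.fract_lt_one y
  rw [hy']
  by_cases hs : 1 - α ≤ Int.fract y
  · have : ⌊y + α⌋ = ⌊y⌋ + 1 := by
      rw [Int.floor_eq_iff]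
      push_cast
      constructor <;> linarith
    simp [sturmian, ← hy, hs, this]
  · push Not at hs
    have : ⌊y + α⌋ = ⌊y⌋ := by
      rw [Int.floor_eq_iff]
      constructor <;> linarith
    simp [sturmian, ← hy, not_le.mpr hs, this]

namespace GoldenTail

variable {α : ℝ} {q : ℕ → ℕ} {p : ℕ → ℤ}

/-- The orbit point `m α + θ` crosses an integer when translated by the `n`-th error. -/
abbrev Hit (α θ : ℝ) (q : ℕ → ℕ) (p : ℕ → ℤ) (n : ℕ) (m : ℤ) : Prop :=
  Crosses (q n * α - p n) (m * α + θ)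

lemma floor_add_q (θ : ℝ) (n : ℕ) (m : ℤ) (hm : ¬ Hit α θ q p n m) :
    ⌊((m + q n : ℤ) : ℝ) * α + θ⌋ = ⌊(m : ℝ) * α + θ⌋ + p n := by
  have h1 : ((m + q n : ℤ) : ℝ) * α + θ = (m * α + θ + (q n * α - p n)) + (p n : ℤ) := by
    push_cast
    ring
  rw [h1, Int.floor_add_intCast]
  simp only [Hit, Crosses, not_not] at hm
  rw [hm]

lemma pot_periodic (lam : ℂ) (θ : ℝ) (n : ℕ) (m : ℤ) (h0 : ¬ Hit α θ q p n m)
    (h1 : ¬ Hit α θ q p n (m + 1)) : pot lam α θ (m + q n) = pot lam α θ m := by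
  unfold pot
  have e : m + (q n : ℤ) + 1 = m + 1 + q n := by ring
  rw [e, floor_add_q θ n m h0, floor_add_q θ n (m + 1) h1]
  congr 2
  ring

/-- If there were no hits in the past, `m ↦ ⌊m α + θ⌋` would have slope exactly `p n / q n`
along multiples of `q n`. -/
lemma exists_hit_le (h : GoldenTail α q p) (θ : ℝ) (n : ℕ) (j : ℤ) :
    ∃ k : ℕ, Hit α θ q p n (j - k) := by
  by_contra! hcon
  have key : ∀ k : ℕ, ⌊((j - k * q n : ℤ) : ℝ) * α + θ⌋ = ⌊(j : ℝ) * α + θ⌋ - k * p n := by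
    intro k
    induction k with
    | zero => simp
    | succ k ih =>
      have h1 := floor_add_q θ n (j - ((k + 1) * q n : ℕ)) (hcon _)
      have e : j - (((k + 1) * q n : ℕ) : ℤ) + q n = j - k * q n := by
        push_cast
        ring
      rw [e, ih] at h1
      push_cast at h1 ⊢
      linarith
  have hd : (q n * α - p n : ℝ) ≠ 0 := by
    intro h0
    have := h.d_mul_neg n
    rw [h0] at this
    simp at this
  obtain ⟨k, hk⟩ := exists_nat_gt (1 / |(q n * α - p n : ℝ)|)
  rw [div_lt_iff₀ (abs_pos.mpr hd)] at hk
  have hk' := key k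
  rw [Int.floor_eq_iff] at hk'
  push_cast at hk'
  have a := Int.floor_le ((j : ℝ) * α + θ)
  have b := Int.lt_floor_add_one ((j : ℝ) * α + θ)
  have : |(k : ℝ) * (q n * α - p n)| < 1 := by
    rw [abs_lt]
    constructor <;> nlinarith
  rw [abs_mul, Nat.abs_cast] at this
  linarith

/-- The trace of the transfer matrix over the first `q n` letters of the characteristic
word. -/
noncomputable def trc (E lam : ℂ) (α : ℝ) (q : ℕ → ℕ) (n : ℕ) : ℂ :=
  (transfer E (pot lam α 0) 1 (q n)).trace

/-- Right after a hit, the orbit is so close to an integer that the next `q n` letters are those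
of the characteristic word. -/
lemma trace_after_hit (h : GoldenTail α q p) (E lam : ℂ) (θ : ℝ) (n : ℕ) (j : ℤ)
    (hj : Hit α θ q p n j) :
    (transfer E (pot lam α θ) (j + 1) (q n)).trace = trc E lam α q n := by
  obtain ⟨r, hr1, hr2⟩ := hj.exists_int
  set z := (j : ℝ) * α + θ - r with hz
  have hfl : ∀ m : ℕ, 1 ≤ m → m ≤ q n + 1 →
      ⌊((j + m : ℤ) : ℝ) * α + θ⌋ = ⌊((m : ℤ) : ℝ) * α + 0⌋ + r := by
    intro m hm1 hm2
    have e : ((j + m : ℤ) : ℝ) * α + θ = (m * α + z) + (r : ℤ) := by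
      rw [hz]
      push_cast
      ring
    rw [e, Int.floor_add_intCast, add_zero, Int.cast_natCast]
    congr 1
    -- an integer separating `m α` from `m α + z` would approximate `m α` too well
    have no : ∀ s : ℤ, ¬ |(m : ℤ) * α - s| < |q n * α - p n| := by
      intro s hs
      have hq := h.q_lt n
      have hb := h.best n m s (by rw [Nat.abs_cast]; exact_mod_cast (by omega)) hs
      omega
    by_contra hne
    rcases lt_or_gt_of_ne hne with hlt | hlt
    · apply no ⌊(m : ℝ) * α⌋
      have h1 : (m : ℝ) * α + z < ⌊(m : ℝ) * α⌋ := Int.floor_lt.mp hlt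
      have h2 := Int.floor_le ((m : ℝ) * α)
      rw [abs_lt, Int.cast_natCast]
      constructor <;> linarith
    · apply no ⌊(m : ℝ) * α + z⌋
      have h1 : (m : ℝ) * α < ⌊(m : ℝ) * α + z⌋ := Int.floor_lt.mp hlt
      have h2 := Int.floor_le ((m : ℝ) * α + z)
      rw [abs_lt, Int.cast_natCast]
      constructor <;> linarith
  unfold trc
  congr 1
  apply transfer_congr
  intro m hm
  have a := hfl (m + 1) (by omega) (by omega)
  have b := hfl (m + 2) (by omega) (by omega)
  unfold pot
  rw [show j + 1 + (m : ℤ) + 1 = j + ((m + 2 : ℕ) : ℤ) by push_cast; ring,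
    show j + 1 + (m : ℤ) = j + ((m + 1 : ℕ) : ℤ) by push_cast; ring,
    show 1 + (m : ℤ) + 1 = ((m + 2 : ℕ) : ℤ) by push_cast; ring,
    show 1 + (m : ℤ) = ((m + 1 : ℕ) : ℤ) by push_cast; ring, a, b]
  congr 2
  ring

/-- Sliding a window of length `q n` back to the most recent hit does not change the trace, so
any window not starting at a hit has the trace of the characteristic word. -/
lemma trace_of_not_hit (h : GoldenTail α q p) (E lam : ℂ) (θ : ℝ) (n : ℕ) (j : ℤ)
    (hj : ¬ Hit α θ q p n j) :
    (transfer E (pot lam α θ) j (q n)).trace = trc E lam α q n := by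
  classical
  have hex := h.exists_hit_le θ n j
  have hk := Nat.find_spec hex
  have hmin : ∀ m : ℕ, m < Nat.find hex → ¬ Hit α θ q p n (j - m) :=
    fun m hm => Nat.find_min hex hm
  set k := Nat.find hex
  have hk0 : k ≠ 0 := by
    intro h0
    rw [h0] at hk
    exact hj (by simpa using hk)
  have hslide : ∀ m : ℕ, m < k → (transfer E (pot lam α θ) (j - m) (q n)).trace =
      (transfer E (pot lam α θ) j (q n)).trace := by
    intro m
    induction m with
    | zero => simp
    | succ m ih =>
      intro hm
      rw [← ih (by omega)]
      have e : j - (m : ℤ) = j - ((m + 1 : ℕ) : ℤ) + 1 := by push_cast; ring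
      rw [e]
      refine (trace_transfer_slide E _ _ _ (pot_periodic lam θ n _ (hmin _ hm) ?_)).symm
      rw [← e]
      exact hmin _ (by omega)
  rw [← hslide (k - 1) (by omega)]
  have e : j - ((k - 1 : ℕ) : ℤ) = j - k + 1 := by omega
  rw [e]
  exact h.trace_after_hit E lam θ n _ hk

lemma trc_rec (h : GoldenTail α q p) (E lam : ℂ) (n : ℕ) :
    trc E lam α q (n + 4) =
      trc E lam α q (n + 3) * trc E lam α q (n + 2) - trc E lam α q (n + 1) := by
  -- the characteristic word of length `q (n+2)` is followed by its prefix of length `q (n+1)`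
  have hmat : ∀ n, transfer E (pot lam α 0) 1 (q (n + 3)) =
      transfer E (pot lam α 0) 1 (q (n + 1)) * transfer E (pot lam α 0) 1 (q (n + 2)) := by
    intro n
    rw [h.q_rec (n + 1), transfer_add]
    congr 1
    apply transfer_congr
    intro m hm
    have hno : ∀ k : ℕ, 1 ≤ k → k ≤ q (n + 1) + 1 → ¬ Hit α 0 q p (n + 2) k := by
      intro k hk1 hk2 hhit
      obtain ⟨r, h1, h2⟩ := hhit.exists_int
      have h3 : |((k : ℤ) : ℝ) * α - r| ≤ |q (n + 2) * α - p (n + 2)| := by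
        rw [abs_le]
        constructor <;> linarith
      have hq := h.q_lt (n + 1)
      have hb := h.best (n + 1) k r (by rw [Nat.abs_cast]; exact_mod_cast (by omega))
        (lt_of_le_of_lt h3 (h.d_anti (n + 1)))
      have : q (n + 1 + 1) = q (n + 2) := rfl
      omega
    have := pot_periodic (p := p) lam 0 (n + 2) ((m + 1 : ℕ) : ℤ)
      (hno _ (by omega) (by omega)) (by exact_mod_cast hno (m + 2) (by omega) (by omega))
    convert this using 2 <;> push_cast <;> ring
  unfold trc
  rw [hmat (n + 1), hmat n]
  exact trace_recursion _ _ (transfer_det _ _ _ _)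

/-- Gordon's identity over a window without hits. -/
lemma gordon_of_no_hit (h : GoldenTail α q p) (E lam : ℂ) (θ : ℝ) (u : ℤ → ℂ)
    (heq : ∀ m : ℤ, u (m + 1) + u (m - 1) + pot lam α θ m * u m = E * u m) (n : ℕ) (j : ℤ)
    (hno : ∀ t, j ≤ t → t ≤ j + q n → ¬ Hit α θ q p n t) (i : ℤ) (hi : i = j ∨ i = j - 1) :
    u (i + 2 * q n) + u i = trc E lam α q n * u (i + q n) := by
  have hg := gordon E (pot lam α θ) u heq j (q n) (fun m hm => by
    have := pot_periodic (p := p) lam θ n (j + m) (hno _ (by omega) (by omega))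
      (hno _ (by omega) (by omega))
    rw [← this]
    congr 1
    ring)
  rw [h.trace_of_not_hit E lam θ n j (hno j le_rfl (by omega))] at hg
  rcases hi with rfl | rfl
  · exact hg.1
  · exact hg.2

/-! ### Every site sees a square -/

/-- Hits of the levels `2k+1` and `2k+2` lie on opposite sides of an integer, and their distance
is below the error of level `2k`; among times at most `q (2k+1)` apart this leaves only one
possible displacement. -/
lemma hit_pair_odd_even (h : GoldenTail α q p) (θ : ℝ) (k : ℕ) (s t : ℤ)
    (hs : Hit α θ q p (2 * k + 2) s) (ht : Hit α θ q p (2 * k + 1) t)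
    (hst : |s - t| ≤ q (2 * k + 1)) : s - t = q (2 * k + 1) := by
  have hA := h.pos k
  have hB : q (2 * k + 2) * α - p (2 * k + 2) < 0 := h.neg (k + 1)
  obtain ⟨r, h1, h2⟩ := hs.of_neg hB
  obtain ⟨r', h3, h4⟩ := ht.of_pos hA
  have hrec := h.d_rec (2 * k)
  have hb := h.best (2 * k) (s - t) (r - r') hst (by
    rw [abs_of_neg (h.neg k), abs_lt]
    push_cast
    constructor <;> linarith)
  rcases hb with ⟨e1, e2⟩ | ⟨e1, -⟩ | ⟨e1, e2⟩
  · exfalso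
    have e1' : (s : ℝ) - t = 0 := by exact_mod_cast e1
    have e2' : (r : ℝ) - r' = 0 := by exact_mod_cast e2
    have : (s : ℝ) = t := by linarith
    rw [this] at h1
    linarith
  · exact e1
  · exfalso
    have e1' : (s : ℝ) - t = -q (2 * k + 1) := by exact_mod_cast e1
    have e2' : (r : ℝ) - r' = -p (2 * k + 1) := by exact_mod_cast e2
    have : (s : ℝ) = t - q (2 * k + 1) := by linarith
    rw [this] at h1
    nlinarith

lemma hit_pair_even_odd (h : GoldenTail α q p) (θ : ℝ) (k : ℕ) (s t : ℤ)
    (hs : Hit α θ q p (2 * k + 2) s) (ht : Hit α θ q p (2 * k + 3) t)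
    (hst : |s - t| ≤ q (2 * k + 2)) : t - s = q (2 * k + 2) := by
  have hA := h.pos k
  have hB : q (2 * k + 2) * α - p (2 * k + 2) < 0 := h.neg (k + 1)
  have hC : 0 < q (2 * k + 3) * α - p (2 * k + 3) := h.pos (k + 1)
  obtain ⟨r, h1, h2⟩ := hs.of_neg hB
  obtain ⟨r', h3, h4⟩ := ht.of_pos hC
  have hrec : q (2 * k + 3) * α - p (2 * k + 3) = (q (2 * k + 2) * α - p (2 * k + 2)) +
    (q (2 * k + 1) * α - p (2 * k + 1)) := h.d_rec (2 * k + 1)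
  have hb := h.best (2 * k + 1) (s - t) (r - r') hst (by
    rw [abs_of_pos (h.pos k), abs_lt]
    push_cast
    constructor <;> linarith)
  have e3 : 2 * k + 1 + 1 = 2 * k + 2 := rfl
  rw [e3] at hb
  rcases hb with ⟨e1, e2⟩ | ⟨e1, e2⟩ | ⟨e1, e2⟩
  · exfalso
    have e1' : (s : ℝ) - t = 0 := by exact_mod_cast e1
    have e2' : (r : ℝ) - r' = 0 := by exact_mod_cast e2
    have : (s : ℝ) = t := by linarith
    rw [this] at h1
    linarith
  · exfalso
    have e1' : (s : ℝ) - t = q (2 * k + 2) := by exact_mod_cast e1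
    have e2' : (r : ℝ) - r' = p (2 * k + 2) := by exact_mod_cast e2
    have : (s : ℝ) = t + q (2 * k + 2) := by linarith
    rw [this] at h1
    nlinarith
  · linarith

lemma hit_gap (h : GoldenTail α q p) (θ : ℝ) (k : ℕ) (s t : ℤ)
    (hs : Hit α θ q p (2 * k + 2) s) (ht : Hit α θ q p (2 * k + 2) t)
    (hst : |s - t| < q (2 * k + 3)) : s = t := by
  have hB : q (2 * k + 2) * α - p (2 * k + 2) < 0 := h.neg (k + 1)
  obtain ⟨r, h1, h2⟩ := hs.of_neg hB
  obtain ⟨r', h3, h4⟩ := ht.of_neg hB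
  have hb := h.best (2 * k + 2) (s - t) (r - r') hst.le (by
    rw [abs_of_neg hB, abs_lt]
    push_cast
    constructor <;> linarith)
  have e3 : 2 * k + 2 + 1 = 2 * k + 3 := rfl
  rw [e3] at hb
  rw [abs_lt] at hst
  omega

/-- Among three consecutive levels, one has a square starting at `i` or `i + 1`. -/
lemma exists_square_start (h : GoldenTail α q p) (θ : ℝ) (k : ℕ) (i : ℤ) :
    ∃ l j, 2 * k + 1 ≤ l ∧ (j = i ∨ j = i + 1) ∧
      ∀ t, j ≤ t → t ≤ j + q l → ¬ Hit α θ q p l t := by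
  have hrec : q (2 * k + 3) = q (2 * k + 2) + q (2 * k + 1) := h.q_rec (2 * k + 1)
  have hq := h.q_lt (2 * k + 1)
  by_cases hB : ∀ t, i ≤ t → t ≤ i + q (2 * k + 2) → ¬ Hit α θ q p (2 * k + 2) t
  · exact ⟨2 * k + 2, i, by omega, Or.inl rfl, hB⟩
  push Not at hB
  obtain ⟨s, hs1, hs2, hs⟩ := hB
  rcases lt_trichotomy s (i + q (2 * k + 1)) with hlt | heq | hgt
  · refine ⟨2 * k + 1, i, by omega, Or.inl rfl, fun t ht1 ht2 ht => ?_⟩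
    have := h.hit_pair_odd_even θ k s t hs ht (by rw [abs_le]; omega)
    omega
  · refine ⟨2 * k + 1, i + 1, by omega, Or.inr rfl, fun t ht1 ht2 ht => ?_⟩
    have := h.hit_pair_odd_even θ k s t hs ht (by rw [abs_le]; omega)
    omega
  · refine ⟨2 * k + 3, i, by omega, Or.inl rfl, fun t ht1 ht2 ht => ?_⟩
    have := h.hit_pair_even_odd θ k s t hs ht (by rw [abs_le]; omega)
    omega

/-- Among three consecutive levels, one has a square centred at `i` or `i + 1`. -/
lemma exists_square_mid (h : GoldenTail α q p) (θ : ℝ) (k : ℕ) (i : ℤ) :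
    ∃ l j, 2 * k + 1 ≤ l ∧ (j = i - q l ∨ j = i - q l + 1) ∧
      ∀ t, j ≤ t → t ≤ j + q l → ¬ Hit α θ q p l t := by
  have hrec : q (2 * k + 3) = q (2 * k + 2) + q (2 * k + 1) := h.q_rec (2 * k + 1)
  have hq := h.q_lt (2 * k + 1)
  by_cases hB : ∀ t, i - q (2 * k + 2) ≤ t → t ≤ i - q (2 * k + 2) + q (2 * k + 2) →
      ¬ Hit α θ q p (2 * k + 2) t
  · exact ⟨2 * k + 2, _, by omega, Or.inl rfl, hB⟩
  push Not at hB
  obtain ⟨s, hs1, hs2, hs⟩ := hB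
  by_cases c1 : s = i
  · refine ⟨2 * k + 1, _, by omega, Or.inr rfl, fun t ht1 ht2 ht => ?_⟩
    have := h.hit_pair_odd_even θ k s t hs ht (by rw [abs_le]; omega)
    omega
  by_cases c2 : i - q (2 * k + 1) ≤ s
  · refine ⟨2 * k + 1, _, by omega, Or.inl rfl, fun t ht1 ht2 ht => ?_⟩
    have := h.hit_pair_odd_even θ k s t hs ht (by rw [abs_le]; omega)
    omega
  by_cases c3 : s = i - q (2 * k + 2)
  · refine ⟨2 * k + 2, _, by omega, Or.inr rfl, fun t ht1 ht2 ht => ?_⟩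
    have := h.hit_gap θ k s t hs ht (by rw [abs_lt]; omega)
    omega
  · refine ⟨2 * k + 3, _, by omega, Or.inl rfl, fun t ht1 ht2 ht => ?_⟩
    have := h.hit_pair_even_odd θ k s t hs ht (by rw [abs_le]; omega)
    omega

end GoldenTail

/-! ### Square-summable solutions -/

/-- A nonzero sequence tending to zero at infinity attains its maximal modulus. -/
lemma exists_max_norm (u : ℤ → ℂ) (hu : Filter.Tendsto u Filter.cofinite (nhds 0)) (hne : u ≠ 0) :
    ∃ i, u i ≠ 0 ∧ ∀ j, ‖u j‖ ≤ ‖u i‖ := by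
  obtain ⟨k, hk⟩ := Function.ne_iff.mp hne
  have hk' : 0 < ‖u k‖ := norm_pos_iff.mpr hk
  have hfin : {j | ‖u k‖ ≤ ‖u j‖}.Finite := by
    have := (tendsto_zero_iff_norm_tendsto_zero.mp hu).eventually_lt_const hk'
    rw [Filter.eventually_cofinite] at this
    simpa only [not_lt] using this
  obtain ⟨i, hi, hmax⟩ := Set.exists_max_image _ (fun j => ‖u j‖) hfin ⟨k, le_refl ‖u k‖⟩
  refine ⟨i, norm_pos_iff.mp (lt_of_lt_of_le hk' hi), fun j => ?_⟩
  by_cases hj : ‖u k‖ ≤ ‖u j‖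
  · exact hmax j hj
  · exact (not_le.mp hj).le.trans hi

/-- Absence of eigenvalues for Sturmian Schrödinger operators when
`limsup aₙ = 1`: every square-summable solution of `H_{λ,α,θ} u = E u` vanishes. -/
theorem absence_of_eigenvalues_limsup_eq_one
    (α : ℝ) (hα0 : 0 < α) (hα1 : α < 1) (hirr : Irrational α)
    (hlim : Filter.atTop.limsup (fun n : ℕ => (cfa α n : ℕ∞)) = 1)
    (lam : ℝ) (hlam : lam ≠ 0) (θ : ℝ) (hθ0 : 0 ≤ θ) (hθ1 : θ < 1)
    (E : ℂ) (u : ℤ → ℂ)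
    (hu : Summable fun n : ℤ => ‖u n‖ ^ 2)
    (heq : ∀ n : ℤ, u (n + 1) + u (n - 1)
      + (lam : ℂ) * (if sturmian α θ n then 1 else 0) * u n = E * u n) :
    u = 0 := by
  obtain ⟨q, p, h⟩ := exists_goldenTail α hα0 hα1 hirr hlim
  have heq' : ∀ n : ℤ, u (n + 1) + u (n - 1) + pot lam α θ n * u n = E * u n := by
    intro n
    rw [← pot_eq lam α θ hα0 hα1 n]
    exact heq n
  have hu0 : Filter.Tendsto u Filter.cofinite (nhds 0) := by
    rw [tendsto_zero_iff_norm_tendsto_zero]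
    have := (hu.tendsto_cofinite_zero).sqrt
    simpa using this
  by_contra hne
  -- a tail of large traces is impossible: at the middle of a square centred at a maximum of `|u|`,
  -- the identity `u (i + q) + u (i - q) = x * u i` forces `|x| ≤ 2`
  have hfreq : ∀ N, ∃ n, N ≤ n ∧ ‖GoldenTail.trc E lam α q (n + 1)‖ ≤ 2 := by
    intro N
    obtain ⟨i, hi0, hi⟩ := exists_max_norm u hu0 hne
    obtain ⟨l, j, hl, hj, hno⟩ := h.exists_square_mid θ N i
    refine ⟨l - 1, by omega, ?_⟩
    rw [show l - 1 + 1 = l by omega]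
    have hg := h.gordon_of_no_hit E lam θ u heq' l j hno (i - q l) (by omega)
    rw [show i - (q l : ℤ) + q l = i by ring, show i - (q l : ℤ) + 2 * q l = i + q l by ring] at hg
    have hn : ‖GoldenTail.trc E lam α q l‖ * ‖u i‖ ≤ ‖u i‖ + ‖u i‖ := by
      rw [← norm_mul, ← hg]
      exact (norm_add_le _ _).trans (add_le_add (hi _) (hi _))
    have := norm_pos_iff.mpr hi0
    by_contra! hcon
    nlinarith
  obtain ⟨C, N, hC⟩ := trace_bounded (fun n => GoldenTail.trc E lam α q (n + 1))
    (fun n => h.trc_rec E lam n) hfreq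
  -- with bounded traces, `|u i| ≤ |u (i + 2 q)| + C |u (i + q)|` for arbitrarily large `q`
  apply hne
  funext i
  have hC0 : 0 ≤ C := (norm_nonneg _).trans (hC N le_rfl)
  by_contra hi
  have hi' : 0 < ‖u i‖ := norm_pos_iff.mpr hi
  have hev := (tendsto_zero_iff_norm_tendsto_zero.mp hu0).eventually_lt_const
    (show 0 < ‖u i‖ / (C + 1) by positivity)
  have hev' : ∀ᶠ m : ℤ in Filter.atTop, ‖u m‖ < ‖u i‖ / (C + 1) :=
    hev.filter_mono (Int.cofinite_eq ▸ le_sup_right)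
  obtain ⟨R, hR⟩ := Filter.eventually_atTop.mp hev'
  obtain ⟨l, j, hl, hj, hno⟩ := h.exists_square_start θ (N + (R - i).toNat) i
  have hql := h.le_q l
  have hg := h.gordon_of_no_hit E lam θ u heq' l j hno i (by omega)
  have h1 := hR (i + q l) (by omega)
  have h2 := hR (i + 2 * q l) (by omega)
  have hCl := hC (l - 1) (by omega)
  simp only [show l - 1 + 1 = l by omega] at hCl
  have h3 : ‖u i‖ ≤ C * ‖u (i + q l)‖ + ‖u (i + 2 * q l)‖ := by
    have e : u i = GoldenTail.trc E lam α q l * u (i + q l) - u (i + 2 * q l) := by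
      rw [← hg]
      ring
    calc ‖u i‖ ≤ ‖GoldenTail.trc E lam α q l‖ * ‖u (i + q l)‖ + ‖u (i + 2 * q l)‖ := by
          conv_lhs => rw [e]
          rw [← norm_mul]
          exact norm_sub_le _ _
      _ ≤ _ := by gcongr
  have h4 : ‖u i‖ / (C + 1) * (C + 1) = ‖u i‖ := by field_simp
  nlinarith
end

section
/- Let α ∈ (0,1) be irrational. For every n ∈ ℕ₀ = {0,1,2,...}, there exists an (n,α)-partition of the sequence v_{α,0}. -/
/-! ### Words read off a sequence -/

/-- The word `u` is read off from the sequence `f` starting at position `m`. -/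
def Occurs (f : ℤ → Bool) (u : List Bool) (m : ℤ) : Prop :=
  u = (List.range u.length).map fun k : ℕ => f (m + (k : ℤ))

/-- In `IsNPartition` the cast to `ℤ` is elaborated as a monadic lift of the list `List.range` to a
list of integers; the result is the same word. -/
theorem Occurs.eq_lift {f : ℤ → Bool} {u : List Bool} {m : ℤ} (h : Occurs f u m) :
    u = (List.range u.length).map fun k => f (m + (k : ℤ)) := by
  refine Eq.trans h ?_
  simp [← List.map_eq_flatMap]

theorem Occurs.append {f : ℤ → Bool} {u w : List Bool} {m : ℤ}
    (hu : Occurs f u m) (hw : Occurs f w (m + u.length)) : Occurs f (u ++ w) m := by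
  unfold Occurs at *
  rw [List.length_append, List.range_add, List.map_append, ← hu, List.map_map]
  congr 1
  refine hw.trans (List.map_congr_left fun k _ => ?_)
  simp [add_assoc]

/-! ### Good pairs of words -/

/-- Displacement of the rotation by `α` over `|u|` steps, seen modulo the integer `P`. -/
noncomputable def disp (α : ℝ) (u : List Bool) (P : ℤ) : ℝ := (u.length : ℝ) * α - P

/-- With `a = disp α u P > 0` and `b = disp α w Q < 0`, the words `u` and `w` are the codings of
the exchange of the two intervals `[-a, -a-b)` and `[-a-b, -b)`: the potential spells `u` from
position `m + 1` if `m α` lies modulo `1` in the first one, and `w` if it lies in the second one. -/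
structure GoodPair (α : ℝ) (u w : List Bool) (P Q : ℤ) : Prop where
  len_u : 0 < u.length
  len_w : 0 < w.length
  pos : 0 < disp α u P
  neg : disp α w Q < 0
  occ_u : ∀ m p : ℤ, -disp α u P ≤ m * α - p → m * α - p < -disp α u P - disp α w Q →
    Occurs (sturmian α 0) u (m + 1)
  occ_w : ∀ m p : ℤ, -disp α u P - disp α w Q ≤ m * α - p → m * α - p < -disp α w Q →
    Occurs (sturmian α 0) w (m + 1)

theorem disp_append (α : ℝ) (u w : List Bool) (P Q : ℤ) :
    disp α (u ++ w) (P + Q) = disp α u P + disp α w Q := by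
  simp only [disp, List.length_append]; push_cast; ring

theorem GoodPair.step_right {α : ℝ} {u w : List Bool} {P Q : ℤ} (h : GoodPair α u w P Q)
    (hs : disp α u P + disp α w Q < 0) : GoodPair α u (u ++ w) P (P + Q) := by
  have hpos := h.pos
  have hneg := h.neg
  refine ⟨h.len_u, by simp [h.len_u], h.pos, by rwa [disp_append], ?_, ?_⟩
  · intro m p h1 h2
    rw [disp_append] at h2
    exact h.occ_u m p h1 (by linarith)
  · intro m p h1 h2
    rw [disp_append] at h1 h2
    refine (h.occ_u m p (by linarith) (by linarith)).append ?_
    have e : ((m + u.length : ℤ) : ℝ) * α - (p + P : ℤ) = m * α - p + disp α u P := by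
      simp only [disp]; push_cast; ring
    have := h.occ_w (m + u.length) (p + P) (by rw [e]; linarith) (by rw [e]; linarith)
    rwa [add_right_comm] at this

theorem GoodPair.step_left {α : ℝ} {u w : List Bool} {P Q : ℤ} (h : GoodPair α u w P Q)
    (hs : 0 < disp α u P + disp α w Q) : GoodPair α (w ++ u) w (Q + P) Q := by
  have hpos := h.pos
  have hneg := h.neg
  refine ⟨by simp [h.len_w], h.len_w, by rw [disp_append]; linarith, h.neg, ?_, ?_⟩
  · intro m p h1 h2
    rw [disp_append] at h1 h2
    refine (h.occ_w m p (by linarith) (by linarith)).append ?_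
    have e : ((m + w.length : ℤ) : ℝ) * α - (p + Q : ℤ) = m * α - p + disp α w Q := by
      simp only [disp]; push_cast; ring
    have := h.occ_u (m + w.length) (p + Q) (by rw [e]; linarith) (by rw [e]; linarith)
    rwa [add_right_comm] at this
  · intro m p h1 h2
    rw [disp_append] at h1
    exact h.occ_w m p (by linarith) h2

theorem GoodPair.iterate_right {α : ℝ} {u w : List Bool} {P Q : ℤ} (h : GoodPair α u w P Q)
    (k : ℕ) (hs : k * disp α u P + disp α w Q < 0) :
    ∃ R : ℤ, GoodPair α u ((List.replicate k u).flatten ++ w) P R ∧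
      disp α ((List.replicate k u).flatten ++ w) R = k * disp α u P + disp α w Q := by
  induction k with
  | zero => exact ⟨Q, by simpa using h, by simp⟩
  | succ k ih =>
    have hpos := h.pos
    push_cast at hs ⊢
    obtain ⟨R, hR, eR⟩ := ih (by linarith)
    have e : (List.replicate (k + 1) u).flatten ++ w
        = u ++ ((List.replicate k u).flatten ++ w) := by simp [List.replicate_succ]
    rw [e]
    refine ⟨P + R, hR.step_right (by rw [eR]; linarith), ?_⟩
    rw [disp_append, eR]; ring

theorem GoodPair.iterate_left {α : ℝ} {u w : List Bool} {P Q : ℤ} (h : GoodPair α u w P Q)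
    (k : ℕ) (hs : 0 < k * disp α w Q + disp α u P) :
    ∃ R : ℤ, GoodPair α ((List.replicate k w).flatten ++ u) w R Q ∧
      disp α ((List.replicate k w).flatten ++ u) R = k * disp α w Q + disp α u P := by
  induction k with
  | zero => exact ⟨P, by simpa using h, by simp⟩
  | succ k ih =>
    have hneg := h.neg
    push_cast at hs ⊢
    obtain ⟨R, hR, eR⟩ := ih (by linarith)
    have e : (List.replicate (k + 1) w).flatten ++ u
        = w ++ ((List.replicate k w).flatten ++ u) := by simp [List.replicate_succ]
    rw [e]
    refine ⟨Q + R, hR.step_left (by rw [eR]; linarith), ?_⟩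
    rw [disp_append, eR]; ring

/-! ### Level zero -/

theorem sturmian_eq {α : ℝ} (m p : ℤ) (h0 : -α ≤ m * α - p) (h1 : m * α - p < 1 - α) :
    sturmian α 0 (m + 1) = decide (1 - 2 * α ≤ m * α - p) := by
  have hf : Int.fract (((m + 1 : ℤ) : ℝ) * α + 0) = m * α - p + α := by
    rw [Int.fract_eq_iff]
    refine ⟨by linarith, by linarith, p, ?_⟩
    push_cast; ring
  unfold sturmian
  rw [hf]
  by_cases h : 1 - 2 * α ≤ m * α - p
  · rw [if_pos (by linarith), decide_eq_true h]
  · rw [if_neg (by intro h'; exact h (by linarith)), decide_eq_false h]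

/-- Level `0`: the words `s_0 = 0` and `s_{-1} = 1`, with displacements `α` and `α - 1`. -/
theorem goodPair_zero {α : ℝ} (hα0 : 0 < α) (hα1 : α < 1) :
    GoodPair α [false] [true] 0 1 := by
  have e0 : disp α [false] 0 = α := by simp [disp]
  have e1 : disp α [true] 1 = α - 1 := by simp [disp]
  refine ⟨by simp, by simp, by rwa [e0], by rw [e1]; linarith, ?_, ?_⟩
  · intro m p h1 h2
    rw [e0] at h1
    rw [e0, e1] at h2
    have := sturmian_eq (α := α) m p h1 (by linarith)
    rw [decide_eq_false (by intro h; linarith)] at this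
    simp [Occurs, this]
  · intro m p h1 h2
    rw [e0, e1] at h1
    rw [e1] at h2
    have := sturmian_eq (α := α) m p (by linarith) (by linarith)
    rw [decide_eq_true (by linarith)] at this
    simp [Occurs, this]

/-! ### The Gauss map and the higher levels -/

/-- Iterates of `α` under the Gauss map. -/
noncomputable def gaussIter (α : ℝ) (n : ℕ) : ℝ := (fun x : ℝ => Int.fract x⁻¹)^[n] α

theorem gaussIter_succ (α : ℝ) (n : ℕ) :
    gaussIter α (n + 1) = Int.fract (gaussIter α n)⁻¹ := by
  simp only [gaussIter, Function.iterate_succ_apply']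

theorem gaussIter_spec {α : ℝ} (hα0 : 0 < α) (hα1 : α < 1) (hirr : Irrational α) (n : ℕ) :
    Irrational (gaussIter α n) ∧ 0 < gaussIter α n ∧ gaussIter α n < 1 := by
  induction n with
  | zero => exact ⟨hirr, hα0, hα1⟩
  | succ n ih =>
    have hi : Irrational (gaussIter α (n + 1)) := by
      rw [gaussIter_succ, Int.fract]
      exact ih.1.inv.sub_intCast _
    refine ⟨hi, lt_of_le_of_ne ?_ hi.ne_zero.symm, ?_⟩
    · rw [gaussIter_succ]; exact Int.fract_nonneg _
    · rw [gaussIter_succ]; exact Int.fract_lt_one _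

theorem cfa_add_gaussIter {α : ℝ} (hα0 : 0 < α) (hα1 : α < 1) (hirr : Irrational α) (n : ℕ) :
    (gaussIter α n)⁻¹ = cfa α (n + 1) + gaussIter α (n + 1) := by
  have h := (gaussIter_spec hα0 hα1 hirr n).2.1
  have e : cfa α (n + 1) = ⌊(gaussIter α n)⁻¹⌋₊ := rfl
  rw [e, gaussIter_succ, natCast_floor_eq_intCast_floor (by positivity), Int.floor_add_fract]

/-- If `c / d` is the `n`-th Gauss iterate, then the `(n+1)`-st one is the ratio of the next
ones, `d - a_{n+1} c` and `c`: this is the recursion `|δ_{n+1}| = |δ_{n-1}| - a_{n+1} |δ_n|`. -/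
theorem gauss_ratio {α : ℝ} (hα0 : 0 < α) (hα1 : α < 1) (hirr : Irrational α) (n : ℕ) {c d : ℝ}
    (hc : c = gaussIter α n * d) :
    d - cfa α (n + 1) * c = gaussIter α (n + 1) * c := by
  have h := (gaussIter_spec hα0 hα1 hirr n).2.1
  have e := cfa_add_gaussIter hα0 hα1 hirr n
  have hd : d = (gaussIter α n)⁻¹ * c := by rw [hc]; field_simp
  rw [e] at hd
  rw [hd]; ring

/-- At level `n + 1` the words `s_{n+1}` and `s_n` form a good pair, in an order depending on the
parity of `n`, and the displacements have ratio minus the Gauss iterate of index `n + 1`. -/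
theorem goodPair_level {α : ℝ} (hα0 : 0 < α) (hα1 : α < 1) (hirr : Irrational α) (n : ℕ) :
    (∃ P Q : ℤ, GoodPair α (sw α (n + 1)) (sw α (n + 2)) P Q ∧
      -disp α (sw α (n + 2)) Q = gaussIter α (n + 1) * disp α (sw α (n + 1)) P) ∨
    (∃ P Q : ℤ, GoodPair α (sw α (n + 2)) (sw α (n + 1)) P Q ∧
      disp α (sw α (n + 2)) P = gaussIter α (n + 1) * -disp α (sw α (n + 1)) Q) := by
  induction n with
  | zero =>
    left
    have e0 : disp α [false] 0 = α := by simp [disp]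
    have e1 : disp α [true] 1 = α - 1 := by simp [disp]
    have hr := gauss_ratio hα0 hα1 hirr 0 (c := α) (d := 1) (by simp [gaussIter])
    have hx := (gaussIter_spec hα0 hα1 hirr 1).2
    simp only [zero_add] at hr ⊢
    have hk : 1 ≤ cfa α 1 := by
      by_contra hk
      have : cfa α 1 = 0 := by omega
      rw [this] at hr
      norm_num at hr
      nlinarith [hx.1, hx.2]
    have hcast : ((cfa α 1 - 1 : ℕ) : ℝ) = cfa α 1 - 1 := by push_cast [hk]; ring
    have hs : ((cfa α 1 - 1 : ℕ) : ℝ) * disp α [false] 0 + disp α [true] 1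
        = -(gaussIter α 1 * α) := by
      rw [hcast, e0, e1, ← hr]; ring
    obtain ⟨R, hR, eR⟩ := (goodPair_zero hα0 hα1).iterate_right (cfa α 1 - 1)
      (by rw [hs]; nlinarith [mul_pos hx.1 hα0])
    refine ⟨0, R, by simpa only [sw] using hR, ?_⟩
    simp only [sw]
    rw [eR, hs, e0]; ring
  | succ n ih =>
    have hx := (gaussIter_spec hα0 hα1 hirr (n + 2)).2
    rcases ih with ⟨P, Q, h, hr⟩ | ⟨P, Q, h, hr⟩
    · right
      have hr' := gauss_ratio hα0 hα1 hirr (n + 1) hr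
      have hneg := h.neg
      have hm := mul_pos hx.1 (neg_pos.2 hneg)
      obtain ⟨R, hR, eR⟩ := h.iterate_left (cfa α (n + 2)) (by linarith)
      refine ⟨R, Q, by simpa only [sw] using hR, ?_⟩
      simp only [sw]
      rw [eR, ← hr']; ring
    · left
      have hr' := gauss_ratio hα0 hα1 hirr (n + 1) hr
      have hpos := h.pos
      have hm := mul_pos hx.1 hpos
      obtain ⟨R, hR, eR⟩ := h.iterate_right (cfa α (n + 2)) (by linarith)
      refine ⟨P, R, by simpa only [sw] using hR, ?_⟩
      simp only [sw]
      rw [eR, ← hr']; ring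

/-! ### From good pairs to partitions -/

/-- The exchange of two intervals `[-a, -a-b)` and `[-a-b, -b)`, lifted to the pairs `(m, p)` of
integers with `m α - p ∈ [-a, -b)`. Keeping the integer part `p` in the data makes the inverse
explicit. -/
theorem GoodPair.exists_equiv {α : ℝ} {u w : List Bool} {P Q : ℤ} (h : GoodPair α u w P Q) :
    ∃ e : Equiv.Perm {s : ℤ × ℤ // -disp α u P ≤ s.1 * α - s.2 ∧ s.1 * α - s.2 < -disp α w Q},
      ∀ s, (Occurs (sturmian α 0) u (s.1.1 + 1) ∧ (e s).1.1 = s.1.1 + u.length) ∨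
        (Occurs (sturmian α 0) w (s.1.1 + 1) ∧ (e s).1.1 = s.1.1 + w.length) := by
  classical
  have hpos := h.pos
  have hneg := h.neg
  have shift : ∀ (v : List Bool) (R : ℤ) (m p : ℤ),
      ((m + v.length : ℤ) : ℝ) * α - (p + R : ℤ) = m * α - p + disp α v R := by
    intro v R m p; simp only [disp]; push_cast; ring
  have unshift : ∀ (v : List Bool) (R : ℤ) (m p : ℤ),
      ((m - v.length : ℤ) : ℝ) * α - (p - R : ℤ) = m * α - p - disp α v R := by
    intro v R m p; simp only [disp]; push_cast; ring
  refine ⟨{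
    toFun := fun s =>
      if hs : s.1.1 * α - s.1.2 < -disp α u P - disp α w Q then
        ⟨(s.1.1 + u.length, s.1.2 + P), by
          have := s.2; rw [shift]; constructor <;> linarith⟩
      else ⟨(s.1.1 + w.length, s.1.2 + Q), by
          have := s.2; rw [shift]; constructor <;> linarith⟩
    invFun := fun s =>
      if hs : 0 ≤ s.1.1 * α - s.1.2 then
        ⟨(s.1.1 - u.length, s.1.2 - P), by
          have := s.2; rw [unshift]; constructor <;> linarith⟩
      else ⟨(s.1.1 - w.length, s.1.2 - Q), by
          have := s.2; rw [unshift]; constructor <;> linarith⟩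
    left_inv := ?_
    right_inv := ?_ }, ?_⟩
  · rintro ⟨⟨m, p⟩, h1, h2⟩
    dsimp only at h1 h2 ⊢
    by_cases hs : m * α - p < -disp α u P - disp α w Q
    · simp only [dif_pos hs]
      rw [dif_pos (by rw [shift]; linarith)]
      simp
    · simp only [dif_neg hs]
      rw [dif_neg (by rw [shift]; linarith)]
      simp
  · rintro ⟨⟨m, p⟩, h1, h2⟩
    dsimp only at h1 h2 ⊢
    by_cases hs : 0 ≤ m * α - p
    · simp only [dif_pos hs]
      rw [dif_pos (by rw [unshift]; linarith)]
      simp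
    · simp only [dif_neg hs]
      rw [dif_neg (by rw [unshift]; linarith)]
      simp
  · rintro ⟨⟨m, p⟩, h1, h2⟩
    dsimp only [Equiv.coe_fn_mk] at h1 h2 ⊢
    by_cases hs : m * α - p < -disp α u P - disp α w Q
    · left
      rw [dif_pos hs]
      exact ⟨h.occ_u m p h1 hs, rfl⟩
    · right
      rw [dif_neg hs]
      exact ⟨h.occ_w m p (not_lt.1 hs) h2, rfl⟩

/-- A good pair of words partitions the potential: follow the orbit of the exchange through the
point `0`, which marks the block starting at position `1`. -/
theorem GoodPair.exists_partition {α : ℝ} {u w : List Bool} {P Q : ℤ} (h : GoodPair α u w P Q) :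
    ∃ (d : ℤ → ℤ) (z : ℤ → List Bool), StrictMono d ∧ (d 0 ≤ 0 ∧ 0 < d 1) ∧
      (∀ j : ℤ, z j = u ∨ z j = w) ∧ (∀ j : ℤ, d (j + 1) = d j + (z j).length) ∧
      (∀ j : ℤ, z j = (List.range (z j).length).map fun k => sturmian α 0 (d j + (k : ℤ))) := by
  obtain ⟨e, he⟩ := h.exists_equiv
  have hpos := h.pos
  have hneg := h.neg
  let s₀ : {s : ℤ × ℤ // -disp α u P ≤ s.1 * α - s.2 ∧ s.1 * α - s.2 < -disp α w Q} :=
    ⟨(0, 0), by simp only [Int.cast_zero, zero_mul, sub_zero]; constructor <;> linarith⟩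
  -- The exponent `j - 1` puts the block starting at `1` at index `1`, so that block `0` ends at `0`.
  let d : ℤ → ℤ := fun j => ((e ^ (j - 1)) s₀).1.1 + 1
  have hz : ∀ j : ℤ, ∃ v : List Bool, (v = u ∨ v = w) ∧ d (j + 1) = d j + v.length ∧
      Occurs (sturmian α 0) v (d j) := by
    intro j
    have hd : d (j + 1) = (e ((e ^ (j - 1)) s₀)).1.1 + 1 := by
      simp only [d]
      rw [show j + 1 - 1 = 1 + (j - 1) by ring, zpow_add, zpow_one, Equiv.Perm.mul_apply]
    rcases he ((e ^ (j - 1)) s₀) with ⟨ho, hl⟩ | ⟨ho, hl⟩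
    · exact ⟨u, Or.inl rfl, by rw [hd, hl]; simp only [d]; ring, ho⟩
    · exact ⟨w, Or.inr rfl, by rw [hd, hl]; simp only [d]; ring, ho⟩
  choose z hzw hzd hzo using hz
  have hlen : ∀ j, 0 < (z j).length := by
    intro j
    rcases hzw j with h' | h' <;> rw [h']
    exacts [h.len_u, h.len_w]
  have hmono : StrictMono d := strictMono_int_of_lt_succ fun j => by
    have := hlen j
    rw [hzd j]; omega
  have hd1 : d 1 = 1 := by simp [d, s₀]
  have hd0 : d 0 < d 1 := hmono (by norm_num)
  exact ⟨d, z, hmono, ⟨by omega, by omega⟩, hzw, hzd, fun j => (hzo j).eq_lift⟩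

/-- Existence of an `(n,α)`-partition of `v_{α,0}` for every `n ∈ ℕ₀`. -/
theorem nPartition_exists
    (α : ℝ) (hα0 : 0 < α) (hα1 : α < 1) (hirr : Irrational α) (n : ℕ) :
    ∃ (d : ℤ → ℤ) (z : ℤ → List Bool), IsNPartition α n (sturmian α 0) d z := by
  rcases n with _ | n
  · obtain ⟨d, z, h1, h2, h3, h4⟩ := (goodPair_zero hα0 hα1).exists_partition
    exact ⟨d, z, h1, h2, by simpa only [sw] using h3, h4⟩
  · rcases goodPair_level hα0 hα1 hirr n with ⟨P, Q, h, -⟩ | ⟨P, Q, h, -⟩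
    · obtain ⟨d, z, h1, h2, h3, h4⟩ := h.exists_partition
      exact ⟨d, z, h1, h2, fun j => (h3 j).symm, h4⟩
    · obtain ⟨d, z, h1, h2, h3, h4⟩ := h.exists_partition
      exact ⟨d, z, h1, h2, h3, h4⟩
end

section
/- Let α ∈ (0,1) be irrational. For every n ∈ ℕ₀, the (n,α)-partition of the sequence v_{α,0} is unique: if (I_j, z_j)_{j∈ℤ} and (I'_j, z'_j)_{j∈ℤ} are both (n,α)-partitions of v_{α,0}, then I_j = I'_j and z_j = z'_j for all j ∈ ℤ. -/
/-- The word `w` is read off from `f` starting at position `a`. -/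
def Spells (f : ℤ → Bool) (w : List Bool) (a : ℤ) : Prop :=
  ∀ k : ℕ, k < w.length → w[k]? = some (f (a + k))

/-- The word `w` is the block of the cut set `C` that ends at `p`: it occupies the positions
`p - |w|, …, p - 1`, it starts at a cut, and no cut lies strictly inside. -/
def IsBlock (f : ℤ → Bool) (C : Set ℤ) (w : List Bool) (p : ℤ) : Prop :=
  p - w.length ∈ C ∧ (∀ q ∈ C, q < p → q ≤ p - w.length) ∧ Spells f w (p - w.length)

/-- `C` is the set of cut points of a decomposition of `f` into blocks `x` and `g`. Only
unboundedness above is recorded, since blocks are followed from right to left. -/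
def IsCutSet (f : ℤ → Bool) (x g : List Bool) (C : Set ℤ) : Prop :=
  (∀ N : ℤ, ∃ p ∈ C, N ≤ p) ∧ ∀ p ∈ C, IsBlock f C x p ∨ IsBlock f C g p

/-- `f` admits at most one decomposition into blocks `x` and `g`. -/
def UniqueCuts (f : ℤ → Bool) (x g : List Bool) : Prop :=
  ∀ C D : Set ℤ, IsCutSet f x g C → IsCutSet f x g D → C = D

/-- The cut set obtained from `C` by also cutting off a final `g` from every block that does not
end in the letter `b`. -/
def refineCuts (f : ℤ → Bool) (b : Bool) (g : List Bool) (C : Set ℤ) : Set ℤ :=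
  {q | q ∈ C ∨ (q + g.length ∈ C ∧ f (q + g.length - 1) ≠ b)}

lemma length_pos_of_getLast? {w : List Bool} {c : Bool} (h : w.getLast? = some c) :
    0 < w.length := by
  cases w with
  | nil => simp at h
  | cons a t => simp

lemma Spells.last {f : ℤ → Bool} {w : List Bool} {p : ℤ} {c : Bool}
    (h : Spells f w (p - w.length)) (hc : w.getLast? = some c) : f (p - 1) = c := by
  have hpos := length_pos_of_getLast? hc
  have h1 := h (w.length - 1) (by omega)
  rw [← List.getLast?_eq_getElem?, hc] at h1
  have h2 : p - (w.length : ℤ) + ((w.length - 1 : ℕ) : ℤ) = p - 1 := by omega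
  rw [h2] at h1
  exact (Option.some.inj h1).symm

lemma Spells.left {f : ℤ → Bool} {x g : List Bool} {a : ℤ} (h : Spells f (x ++ g) a) :
    Spells f x a := by
  intro k hk
  have := h k (by simp; omega)
  rwa [List.getElem?_append_left hk] at this

lemma Spells.right {f : ℤ → Bool} {x g : List Bool} {a : ℤ} (h : Spells f (x ++ g) a) :
    Spells f g (a + x.length) := by
  intro k hk
  have := h (x.length + k) (by simp; omega)
  rw [List.getElem?_append_right (by omega)] at this
  simpa [add_assoc] using this

lemma UniqueCuts.symm {f : ℤ → Bool} {x g : List Bool} (h : UniqueCuts f x g) :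
    UniqueCuts f g x := fun C D hC hD =>
  h C D ⟨hC.1, fun p hp => (hC.2 p hp).symm⟩ ⟨hD.1, fun p hp => (hD.2 p hp).symm⟩

/-- In a cut set for `{x, xg}`, a cut preceded by a letter other than the last letter of `x` ends
a block `xg`. -/
lemma IsCutSet.block_of_ne {f : ℤ → Bool} {x g : List Bool} {b : Bool} {C : Set ℤ}
    (hx : x.getLast? = some b) (hC : IsCutSet f x (x ++ g) C) {r : ℤ} (hr : r ∈ C)
    (hb : f (r - 1) ≠ b) : IsBlock f C (x ++ g) r :=
  (hC.2 r hr).resolve_left fun h => hb (h.2.2.last hx)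

lemma IsCutSet.refine {f : ℤ → Bool} {x g : List Bool} {b : Bool} {C : Set ℤ}
    (hx : x.getLast? = some b) (hg : g.getLast? = some (!b)) (hC : IsCutSet f x (x ++ g) C) :
    IsCutSet f x g (refineCuts f b g C) := by
  have hxp := length_pos_of_getLast? hx
  have hgp := length_pos_of_getLast? hg
  have hblk : ∀ r ∈ C, f (r - 1) ≠ b → r - (x.length + g.length) ∈ C ∧
      (∀ q ∈ C, q < r → q ≤ r - (x.length + g.length)) ∧
      Spells f (x ++ g) (r - (x.length + g.length)) := by
    intro r hr hb
    simpa [IsBlock] using hC.block_of_ne hx hr hb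
  refine ⟨fun N => ?_, ?_⟩
  · obtain ⟨p, hp, hN⟩ := hC.1 N
    exact ⟨p, Or.inl hp, hN⟩
  · rintro p (hp | ⟨hr, hb⟩)
    · by_cases hb : f (p - 1) = b
      · left
        rcases hC.2 p hp with h | h
        · refine ⟨Or.inl h.1, ?_, h.2.2⟩
          rintro q (hq | ⟨hr, hrb⟩) hqp
          · exact h.2.1 q hq hqp
          · have h3 := hblk _ hr hrb
            rcases lt_trichotomy (q + (g.length : ℤ)) p with hlt | heq | hgt
            · have := h.2.1 _ hr hlt
              omega
            · rw [heq] at hrb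
              exact absurd hb hrb
            · have := h3.2.1 p hp hgt
              omega
        · have h1 := h.2.2.last (c := !b) (by simp [List.getLast?_append, hg])
          rw [hb] at h1
          cases b <;> simp at h1
      · right
        have h := hblk p hp hb
        refine ⟨Or.inr ⟨by simpa using hp, by simpa using hb⟩, ?_, ?_⟩
        · rintro q (hq | ⟨hr, hrb⟩) hqp
          · have := h.2.1 q hq hqp
            omega
          · have h3 := hblk _ hr hrb
            by_cases hle : q + (g.length : ℤ) ≤ p
            · omega
            · have := h3.2.1 p hp (by omega)
              omega
        · have := h.2.2.right
          convert this using 1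
          ring
    · left
      have h := hblk _ hr hb
      have he : p + (g.length : ℤ) - (x.length + g.length) = p - x.length := by ring
      rw [he] at h
      refine ⟨Or.inl h.1, ?_, h.2.2.left⟩
      rintro q (hq | ⟨hr2, hrb⟩) hqp
      · exact h.2.1 q hq (by omega)
      · have := h.2.1 _ hr2 (by omega)
        omega

/-- A cut of `C` that is not a cut of `D` would begin a final `g` of some block `xg` of `D`, hence
lie inside the block `xg` of `C` with the same right end. -/
lemma subset_of_refineCuts_eq {f : ℤ → Bool} {x g : List Bool} {b : Bool} {C D : Set ℤ}
    (hx : x.getLast? = some b) (hg : g.getLast? = some (!b)) (hC : IsCutSet f x (x ++ g) C)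
    (he : refineCuts f b g C = refineCuts f b g D) : C ⊆ D := by
  have hxp := length_pos_of_getLast? hx
  have hgp := length_pos_of_getLast? hg
  intro p hp
  have hpD : p ∈ refineCuts f b g D := he ▸ Or.inl hp
  rcases hpD with h | ⟨hr, hb⟩
  · exact h
  exfalso
  have hrC : p + (g.length : ℤ) ∈ refineCuts f b g C := he ▸ Or.inl hr
  rcases hrC with h | ⟨hr2, hb2⟩
  · have h1 := (hC.block_of_ne hx h hb).2.1 p hp (by omega)
    simp only [List.length_append, Nat.cast_add] at h1
    omega
  · have h1 := (hC.block_of_ne hx hr2 hb2).2.2.left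
    apply hb
    apply Spells.last (w := x) _ hx
    convert h1 using 1
    simp

lemma UniqueCuts.step {f : ℤ → Bool} {x g : List Bool} {b : Bool}
    (hx : x.getLast? = some b) (hg : g.getLast? = some (!b)) (h : UniqueCuts f x g) :
    UniqueCuts f x (x ++ g) := by
  intro C D hC hD
  have he := h _ _ (hC.refine hx hg) (hD.refine hx hg)
  exact Set.Subset.antisymm (subset_of_refineCuts_eq hx hg hC he)
    (subset_of_refineCuts_eq hx hg hD he.symm)

lemma UniqueCuts.pow {f : ℤ → Bool} {x g : List Bool} {b : Bool}
    (hx : x.getLast? = some b) (hg : g.getLast? = some (!b)) (h : UniqueCuts f x g) (a : ℕ) :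
    UniqueCuts f x ((List.replicate a x).flatten ++ g) := by
  induction a with
  | zero => simpa using h
  | succ a ih =>
    have := ih.step hx (by simp [List.getLast?_append, hg])
    simpa [List.replicate_succ] using this

lemma uniqueCuts_letters (f : ℤ → Bool) : UniqueCuts f [true] [false] := by
  have key : ∀ C : Set ℤ, IsCutSet f [true] [false] C → C = Set.univ := by
    intro C hC
    have hstep : ∀ p ∈ C, p - 1 ∈ C := by
      intro p hp
      rcases hC.2 p hp with h | h <;> simpa using h.1
    have hall : ∀ p ∈ C, ∀ k : ℕ, p - k ∈ C := by
      intro p hp k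
      induction k with
      | zero => simpa using hp
      | succ k ih =>
        have := hstep _ ih
        push_cast
        rwa [← sub_sub]
    refine Set.eq_univ_of_forall fun m => ?_
    obtain ⟨p, hp, hm⟩ := hC.1 m
    have := hall p hp (p - m).toNat
    rwa [Int.toNat_of_nonneg (by omega), sub_sub_cancel] at this
  intro C D hC hD
  rw [key C hC, key D hD]

lemma sw_getLast? (α : ℝ) : ∀ n : ℕ, ∃ b : Bool,
    (sw α n).getLast? = some b ∧ (sw α (n + 1)).getLast? = some (!b)
  | 0 => ⟨true, by simp [sw], by simp [sw]⟩
  | 1 => ⟨false, by simp [sw], by simp [sw]⟩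
  | n + 2 => by
    obtain ⟨b, h1, h2⟩ := sw_getLast? α (n + 1)
    exact ⟨!b, h2, by simp [sw, List.getLast?_append, h1]⟩

lemma uniqueCuts_sw (α : ℝ) (f : ℤ → Bool) (n : ℕ) : UniqueCuts f (sw α n) (sw α (n + 1)) := by
  induction n with
  | zero => simpa [sw] using uniqueCuts_letters f
  | succ n ih =>
    obtain ⟨b, h1, h2⟩ := sw_getLast? α n
    cases n with
    | zero =>
      have := (uniqueCuts_letters f).symm.pow (b := false) (by simp) (by simp) (cfa α 1 - 1)
      simpa only [sw] using this
    | succ n =>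
      have := ih.symm.pow h2 (by simpa using h1) (cfa α (n + 2))
      simpa only [sw] using this

lemma IsNPartition.isCutSet {α : ℝ} {n : ℕ} {f : ℤ → Bool} {d : ℤ → ℤ} {z : ℤ → List Bool}
    (h : IsNPartition α n f d z) : IsCutSet f (sw α n) (sw α (n + 1)) (Set.range d) := by
  obtain ⟨hmono, -, hz, hlen, hsp⟩ := h
  refine ⟨fun N => ?_, ?_⟩
  · have hgrow : ∀ k : ℕ, d 0 + k ≤ d k := by
      intro k
      induction k with
      | zero => simp
      | succ k ih =>
        have : d k < d (k + 1) := hmono (by omega)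
        push_cast
        omega
    refine ⟨d (N - d 0).toNat, ⟨_, rfl⟩, ?_⟩
    have := hgrow (N - d 0).toNat
    omega
  · rintro _ ⟨i, rfl⟩
    have hblk : IsBlock f (Set.range d) (z (i - 1)) (d i) := by
      have h1 := hlen (i - 1)
      rw [sub_add_cancel] at h1
      have h2 : d i - ((z (i - 1)).length : ℤ) = d (i - 1) := by omega
      unfold IsBlock
      rw [h2]
      refine ⟨⟨_, rfl⟩, ?_, ?_⟩
      · rintro _ ⟨j, rfl⟩ hj
        exact hmono.monotone (by have := hmono.lt_iff_lt.1 hj; omega)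
      · intro k hk
        conv_lhs => rw [hsp (i - 1)]
        -- In `IsNPartition` the list of naturals is coerced to integers by a monadic bind.
        simp [← List.map_eq_flatMap, hk]
    rcases hz (i - 1) with h | h
    · right
      rwa [h] at hblk
    · left
      rwa [h] at hblk

/-- A strictly increasing two-sided sequence, indexed so that `0` lies in `[d 0, d 1)`, is
determined by its range. -/
lemma eq_of_range_eq {d e : ℤ → ℤ} (hd : StrictMono d) (he : StrictMono e)
    (hd0 : d 0 ≤ 0 ∧ 0 < d 1) (he0 : e 0 ≤ 0 ∧ 0 < e 1) (hr : Set.range d = Set.range e) :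
    d = e := by
  have zero_le : ∀ {d e : ℤ → ℤ}, StrictMono e → d 0 ≤ 0 → 0 < e 1 →
      Set.range d = Set.range e → d 0 ≤ e 0 := by
    intro d e he hd0 he0 hr
    obtain ⟨k, hk⟩ : d 0 ∈ Set.range e := hr ▸ ⟨0, rfl⟩
    have : k < 1 := he.lt_iff_lt.1 (by omega)
    rw [← hk]
    exact he.monotone (by omega)
  have succ_le : ∀ {d e : ℤ → ℤ}, StrictMono d → StrictMono e → Set.range d = Set.range e →
      ∀ i, d i = e i → d (i + 1) ≤ e (i + 1) := by
    intro d e hd he hr i hi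
    obtain ⟨k, hk⟩ : e (i + 1) ∈ Set.range d := hr ▸ ⟨_, rfl⟩
    have h1 : e i < e (i + 1) := he (by omega)
    have : i < k := hd.lt_iff_lt.1 (by omega)
    rw [← hk]
    exact hd.monotone (by omega)
  have pred_le : ∀ {d e : ℤ → ℤ}, StrictMono d → StrictMono e → Set.range d = Set.range e →
      ∀ i, d i = e i → d (i - 1) ≤ e (i - 1) := by
    intro d e hd he hr i hi
    obtain ⟨k, hk⟩ : d (i - 1) ∈ Set.range e := hr ▸ ⟨_, rfl⟩
    have h1 : d (i - 1) < d i := hd (by omega)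
    have : k < i := he.lt_iff_lt.1 (by omega)
    rw [← hk]
    exact he.monotone (by omega)
  funext i
  induction i with
  | zero => exact le_antisymm (zero_le he hd0.1 he0.2 hr) (zero_le hd he0.1 hd0.2 hr.symm)
  | succ i ih => exact le_antisymm (succ_le hd he hr _ ih) (succ_le he hd hr.symm _ ih.symm)
  | pred i ih => exact le_antisymm (pred_le hd he hr _ ih) (pred_le he hd hr.symm _ ih.symm)

/-- Uniqueness of the `(n,α)`-partition of `v_{α,0}` for every `n ∈ ℕ₀`. -/
theorem nPartition_unique
    (α : ℝ) (hα0 : 0 < α) (hα1 : α < 1) (hirr : Irrational α) (n : ℕ)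
    (d d' : ℤ → ℤ) (z z' : ℤ → List Bool)
    (h : IsNPartition α n (sturmian α 0) d z)
    (h' : IsNPartition α n (sturmian α 0) d' z') :
    d = d' ∧ z = z' := by
  have hd : d = d' := eq_of_range_eq h.1 h'.1 h.2.1 h'.2.1
    (uniqueCuts_sw α _ n _ _ h.isCutSet h'.isCutSet)
  subst hd
  refine ⟨rfl, funext fun j => ?_⟩
  have hl : (z j).length = (z' j).length := by
    have h1 := h.2.2.2.1 j
    have h2 := h'.2.2.2.1 j
    omega
  rw [h.2.2.2.2 j, h'.2.2.2.2 j, hl]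
end

section
/- Let α ∈ (0,1) be irrational. For every n ∈ ℕ₀ and every θ ∈ [0,1), there exists a unique (n,α)-partition of the sequence v_{α,θ}. -/
/-! ### Words read along a two-sided sequence -/

/-- The word `w` is read in the sequence `f` from position `p` on. -/
def Reads (f : ℤ → Bool) : ℤ → List Bool → Prop
  | _, [] => True
  | p, a :: w => f p = a ∧ Reads f (p + 1) w

lemma reads_append (f : ℤ → Bool) (u v : List Bool) : ∀ p : ℤ,
    Reads f p (u ++ v) ↔ Reads f p u ∧ Reads f (p + u.length) v := by
  induction u with
  | nil => intro p; simp [Reads]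
  | cons a u ih =>
    intro p
    have h : p + 1 + (u.length : ℤ) = p + ((u.length : ℤ) + 1) := by ring
    simp [Reads, ih, and_assoc, h]

lemma reads_flatten_replicate (f : ℤ → Bool) (u : List Bool) (m : ℕ) : ∀ p : ℤ,
    Reads f p (List.replicate m u).flatten ↔
      ∀ i : ℕ, i < m → Reads f (p + i * u.length) u := by
  induction m with
  | zero => intro p; simp [Reads]
  | succ m ih =>
    intro p
    rw [List.replicate_succ, List.flatten_cons, reads_append, ih, Nat.forall_lt_succ_left]
    simp only [Nat.cast_zero, zero_mul, add_zero, Nat.cast_add, Nat.cast_one]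
    have h : ∀ i : ℕ, p + u.length + (i : ℤ) * u.length = p + ((i : ℤ) + 1) * u.length := by
      intro i; ring
    simp only [h]

/-- Here `List.range` is coerced to a list of integers, which elaborates to a monadic bind. -/
lemma reads_iff (f : ℤ → Bool) (w : List Bool) : ∀ p : ℤ,
    Reads f p w ↔ w = (List.range w.length).map fun k => f (p + (k : ℤ)) := by
  have hcast : ∀ l : List ℕ, (do let a ← l; pure (a : ℤ)) = l.map (fun a : ℕ => (a : ℤ)) := by
    intro l
    exact List.map_eq_flatMap.symm
  simp only [hcast, List.map_map]
  induction w with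
  | nil => intro p; simp [Reads]
  | cons a w ih =>
    intro p
    have h : ∀ k : ℕ, p + 1 + (k : ℤ) = p + ((k : ℤ) + 1) := by intro k; ring
    simp only [Reads, ih, List.length_cons, List.range_succ_eq_map, List.map_cons, List.map_map,
      List.cons.injEq, Nat.cast_zero, add_zero, Function.comp_def, Nat.succ_eq_add_one,
      Nat.cast_add, Nat.cast_one, h]
    rw [eq_comm (a := f p)]

/-! ### Bi-infinite integer sequences -/

lemma exists_orbit {X : Type*} (R : X → X → Prop) (fw : ∀ x, ∃ y, R x y) (bw : ∀ y, ∃ x, R x y)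
    (x₀ : X) : ∃ e : ℤ → X, ∀ j, R (e j) (e (j + 1)) := by
  choose s hs using fw
  choose r hr using bw
  refine ⟨fun j => match j with
    | Int.ofNat n => s^[n] x₀
    | Int.negSucc n => r^[n + 1] x₀, ?_⟩
  intro j
  match j with
  | Int.ofNat n =>
    change R (s^[n] x₀) (s^[n + 1] x₀)
    rw [Function.iterate_succ_apply']
    exact hs _
  | Int.negSucc 0 =>
    change R (r x₀) x₀
    exact hr _
  | Int.negSucc (n + 1) =>
    change R (r^[n + 1 + 1] x₀) (r^[n + 1] x₀)
    rw [Function.iterate_succ_apply' r (n + 1)]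
    exact hr _

lemma exists_cumulative (g : ℤ → ℤ) : ∃ e : ℤ → ℤ, ∀ j, e (j + 1) = e j + g j := by
  obtain ⟨o, ho⟩ := exists_orbit (X := ℤ × ℤ) (fun a b => b.1 = a.1 + 1 ∧ b.2 = a.2 + g a.1)
    (fun a => ⟨(a.1 + 1, a.2 + g a.1), rfl, rfl⟩)
    (fun b => ⟨(b.1 - 1, b.2 - g (b.1 - 1)), by simp, by simp⟩) (0, 0)
  have h1 : ∀ j, (o j).1 = (o 0).1 + j := by
    intro j
    induction j using Int.induction_on with
    | zero => simp
    | succ i ih => rw [(ho i).1, ih]; ring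
    | pred i ih =>
      have := (ho (-(i : ℤ) - 1)).1
      rw [sub_add_cancel] at this
      linarith
  refine ⟨fun j => (o (j - (o 0).1)).2, fun j => ?_⟩
  have h := (ho (j - (o 0).1)).2
  rw [h1 (j - (o 0).1), add_sub_cancel] at h
  simp only
  rw [← h, sub_add_eq_add_sub]

lemma strictMono_bounds {e : ℤ → ℤ} (he : StrictMono e) (j : ℤ) :
    (0 ≤ j → e 0 + j ≤ e j) ∧ (j ≤ 0 → e j ≤ e 0 + j) := by
  induction j using Int.induction_on with
  | zero => simp
  | succ i ih =>
    have := he (lt_add_one (i : ℤ))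
    constructor <;> intro h
    · have := ih.1 (by omega); omega
    · omega
  | pred i ih =>
    have := he (sub_one_lt (-(i : ℤ)))
    constructor <;> intro h
    · omega
    · have := ih.2 (by omega); omega

/-- A strictly increasing `e : ℤ → ℤ` cuts `ℤ` into intervals, one of which contains `i`. -/
lemma exists_index {e : ℤ → ℤ} (he : StrictMono e) (i : ℤ) : ∃ j, e j ≤ i ∧ i < e (j + 1) := by
  obtain ⟨j, h1, h2⟩ := Int.exists_greatest_of_bdd (P := fun j => e j ≤ i)
    ⟨|i - e 0|, fun z hz => by
      by_contra hc
      have h0 := abs_nonneg (i - e 0)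
      have h1 := le_abs_self (i - e 0)
      have := (strictMono_bounds he z).1 (by omega)
      omega⟩
    ⟨-|i - e 0|, by
      have h0 := abs_nonneg (i - e 0)
      have h1 := neg_abs_le (i - e 0)
      have := (strictMono_bounds he (-|i - e 0|)).2 (by omega)
      omega⟩
  refine ⟨j, h1, ?_⟩
  by_contra hc
  have := h2 (j + 1) (not_lt.mp hc)
  omega

lemma index_unique {e : ℤ → ℤ} (he : StrictMono e) {i j k : ℤ} (h1 : e j ≤ i) (h2 : i < e (j + 1))
    (h3 : e k ≤ i) (h4 : i < e (k + 1)) : j = k := by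
  have a := he.lt_iff_lt.mp (h1.trans_lt h4)
  have b := he.lt_iff_lt.mp (h3.trans_lt h2)
  omega

/-- Two strictly increasing `ℤ`-indexed sequences with the same range differ by an index shift. -/
lemma shift_of_range {e₁ e₂ : ℤ → ℤ} (h₁ : StrictMono e₁) (h₂ : StrictMono e₂)
    (h12 : ∀ j, ∃ k, e₂ k = e₁ j) (h21 : ∀ j, ∃ k, e₁ k = e₂ j) :
    ∃ c : ℤ, ∀ j, e₂ j = e₁ (j + c) := by
  obtain ⟨c, hc⟩ := h21 0
  have step : ∀ j k, e₂ j = e₁ k → e₂ (j + 1) = e₁ (k + 1) := by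
    intro j k h
    obtain ⟨a, ha⟩ := h21 (j + 1)
    obtain ⟨b, hb⟩ := h12 (k + 1)
    have ha' : k < a := h₁.lt_iff_lt.mp (by rw [ha, ← h]; exact h₂ (lt_add_one j))
    have hb' : j < b := h₂.lt_iff_lt.mp (by rw [hb, h]; exact h₁ (lt_add_one k))
    have h3 : e₁ (k + 1) ≤ e₁ a := h₁.monotone (by omega)
    have h4 : e₂ (j + 1) ≤ e₂ b := h₂.monotone (by omega)
    omega
  have stepb : ∀ j k, e₂ j = e₁ k → e₂ (j - 1) = e₁ (k - 1) := by
    intro j k h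
    obtain ⟨a, ha⟩ := h21 (j - 1)
    obtain ⟨b, hb⟩ := h12 (k - 1)
    have ha' : a < k := h₁.lt_iff_lt.mp (by rw [ha, ← h]; exact h₂ (sub_one_lt j))
    have hb' : b < j := h₂.lt_iff_lt.mp (by rw [hb, h]; exact h₁ (sub_one_lt k))
    have h3 : e₁ a ≤ e₁ (k - 1) := h₁.monotone (by omega)
    have h4 : e₂ b ≤ e₂ (j - 1) := h₂.monotone (by omega)
    omega
  refine ⟨c, fun j => ?_⟩
  induction j using Int.induction_on with
  | zero => simp [hc]
  | succ i ih => rw [step _ _ ih]; congr 1; ring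
  | pred i ih => rw [stepb _ _ ih]; congr 1; ring

/-! ### Factorizations over two words and regrouping -/

/-- `f` is the bi-infinite concatenation of the words `u` (where `t j = false`) and `v`
(where `t j = true`), the `j`-th one starting at `d j`. There is no normalization at `0`, so
`(d, t)` is only determined up to an index shift. -/
def Factors (u v : List Bool) (f : ℤ → Bool) (d : ℤ → ℤ) (t : ℤ → Bool) : Prop :=
  ∀ j, d (j + 1) = d j + (bif t j then v else u).length ∧ Reads f (d j) (bif t j then v else u)

/-- `t` is the bi-infinite concatenation of the words `0^m 1` (where `t' j = false`) and `0`
(where `t' j = true`), the `j`-th one starting at `e j`. -/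
def Groups (m : ℕ) (t : ℤ → Bool) (e : ℤ → ℤ) (t' : ℤ → Bool) : Prop :=
  ∀ j, (t' j = true → t (e j) = false ∧ e (j + 1) = e j + 1) ∧
    (t' j = false → (∀ i : ℕ, i < m → t (e j + i) = false) ∧ t (e j + m) = true ∧
      e (j + 1) = e j + m + 1)

lemma Groups.strictMono {m : ℕ} {t e t'} (h : Groups m t e t') : StrictMono e := by
  refine strictMono_int_of_lt_succ fun j => ?_
  rcases ht : t' j with _ | _
  · have := ((h j).2 ht).2.2; omega
  · have := ((h j).1 ht).2; omega

/-- Each `1` of `t` ends a block `0^m 1`. -/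
lemma Groups.of_true {m : ℕ} {t e t'} (h : Groups m t e t') {i : ℤ} (hi : t i = true) :
    ∃ j, t' j = false ∧ e j = i - m := by
  obtain ⟨j, h1, h2⟩ := exists_index h.strictMono i
  refine ⟨j, ?_⟩
  rcases ht : t' j with _ | _
  · refine ⟨rfl, ?_⟩
    obtain ⟨a, b, c⟩ := (h j).2 ht
    by_contra hne
    have := a (i - e j).toNat (by omega)
    rw [show e j + ((i - e j).toNat : ℤ) = i by omega, hi] at this
    exact absurd this (by simp)
  · obtain ⟨a, b⟩ := (h j).1 ht
    rw [show i = e j by omega, a] at hi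
    exact absurd hi (by simp)

lemma Groups.break_of_break {m : ℕ} {t e₁ t₁ e₂ t₂} (h₁ : Groups m t e₁ t₁)
    (h₂ : Groups m t e₂ t₂) (j : ℤ) : ∃ k, e₂ k = e₁ j := by
  obtain ⟨k, h1, h2⟩ := exists_index h₂.strictMono (e₁ j)
  refine ⟨k, ?_⟩
  rcases ht : t₂ k with _ | _
  · obtain ⟨a, b, c⟩ := (h₂ k).2 ht
    obtain ⟨l, hl, hl'⟩ := h₁.of_true b
    have hl2 := ((h₁ l).2 hl).2.2
    have : l = j := index_unique h₁.strictMono (i := e₁ j) (by omega) (by omega) le_rfl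
      (h₁.strictMono (lt_add_one j))
    subst this
    omega
  · have := ((h₂ k).1 ht).2
    omega

lemma Groups.type_eq {m : ℕ} {t e t'} (h : Groups m t e t') (j : ℤ) : t' j = !t (e j + m) := by
  rcases ht : t' j with _ | _
  · simp [((h j).2 ht).2.1]
  · rcases hx : t (e j + m) with _ | _
    · rfl
    · obtain ⟨k, hk, hk'⟩ := h.of_true hx
      have : k = j := h.strictMono.injective (by omega)
      subst this
      rw [ht] at hk
      exact absurd hk (by simp)

lemma Groups.unique {m : ℕ} {t e₁ t₁ e₂ t₂} (h₁ : Groups m t e₁ t₁)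
    (h₂ : Groups m t e₂ t₂) : ∃ c : ℤ, ∀ j, e₂ j = e₁ (j + c) ∧ t₂ j = t₁ (j + c) := by
  obtain ⟨c, hc⟩ := shift_of_range h₁.strictMono h₂.strictMono (h₁.break_of_break h₂)
    (h₂.break_of_break h₁)
  exact ⟨c, fun j => ⟨hc j, by rw [h₁.type_eq, h₂.type_eq, hc j]⟩⟩

lemma Factors.strictMono {u v : List Bool} {f d t} (hu : u ≠ []) (hv : v ≠ [])
    (h : Factors u v f d t) : StrictMono d := by
  refine strictMono_int_of_lt_succ fun j => ?_
  have hu' := List.length_pos_iff.mpr hu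
  have hv' := List.length_pos_iff.mpr hv
  rw [(h j).1]
  rcases t j <;> simp <;> omega

/-- Grouping the type sequence of a factorization over `(u, v)` gives one over `(u^m v, u)`. -/
lemma Factors.group {u v : List Bool} {f d t} (h : Factors u v f d t) {m : ℕ} {e t'}
    (hg : Groups m t e t') :
    Factors ((List.replicate m u).flatten ++ v) u f (d ∘ e) t' := by
  intro j
  simp only [Function.comp_apply]
  rcases ht : t' j with _ | _
  · obtain ⟨a, b, c⟩ := (hg j).2 ht
    have key : ∀ i : ℕ, i ≤ m → d (e j + i) = d (e j) + i * u.length := by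
      intro i
      induction i with
      | zero => simp
      | succ i ih =>
        intro hi
        have := (h (e j + i)).1
        rw [a i (by omega), ih (by omega), cond_false] at this
        push_cast
        rw [← add_assoc, this]
        ring
    have hm := h (e j + m)
    rw [b, key m le_rfl, cond_true, ← c] at hm
    simp only [cond_false, List.length_append, List.length_flatten, List.map_replicate,
      List.sum_replicate, smul_eq_mul, reads_append, reads_flatten_replicate]
    push_cast
    refine ⟨by rw [hm.1]; ring, fun i hi => ?_, hm.2⟩
    have := (h (e j + i)).2
    rwa [a i hi, key i hi.le, cond_false] at this
  · obtain ⟨a, b⟩ := (hg j).1 ht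
    have := h (e j)
    rw [a] at this
    rw [b]
    exact this

/-- Every factorization over `(u^m v, u)` arises from one over `(u, v)` by grouping. -/
lemma Factors.split {u v : List Bool} {f d' t'} {m : ℕ}
    (h : Factors ((List.replicate m u).flatten ++ v) u f d' t') :
    ∃ d t e, Factors u v f d t ∧ Groups m t e t' ∧ d' = d ∘ e := by
  obtain ⟨e, he⟩ := exists_cumulative fun j => bif t' j then 1 else (m : ℤ) + 1
  have hF : ∀ j, t' j = false → e (j + 1) = e j + m + 1 := by
    intro j hj; rw [he, hj, cond_false]; ring
  have hT : ∀ j, t' j = true → e (j + 1) = e j + 1 := by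
    intro j hj; rw [he, hj, cond_true]
  have hmono : StrictMono e := by
    refine strictMono_int_of_lt_succ fun j => ?_
    rcases ht : t' j with _ | _
    · have := hF j ht; omega
    · have := hT j ht; omega
  choose J hJ1 hJ2 using exists_index hmono
  have hJ : ∀ i j, e j ≤ i → i < e (j + 1) → J i = j := fun i j h1 h2 =>
    index_unique hmono (hJ1 i) (hJ2 i) h1 h2
  have hJe : ∀ j, J (e j) = j := fun j => hJ _ _ le_rfl (hmono (lt_add_one j))
  let d : ℤ → ℤ := fun i => d' (J i) + (i - e (J i)) * u.length
  let t : ℤ → Bool := fun i => decide (t' (J i) = false ∧ i = e (J i) + m)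
  have hde : ∀ j, d (e j) = d' j := by intro j; simp [d, hJe]
  refine ⟨d, t, e, ?_, ?_, ?_⟩
  · intro i
    obtain ⟨j, hj⟩ : ∃ j, J i = j := ⟨_, rfl⟩
    have h1 := hJ1 i
    have h2 := hJ2 i
    rw [hj] at h1 h2
    have hd : d i = d' j + (i - e j) * u.length := by simp [d, hj]
    have hti : t i = decide (t' j = false ∧ i = e j + m) := by simp [t, hj]
    rcases ht : t' j with _ | _
    · have h3 := hF j ht
      have hh := h j
      rw [ht] at hh
      simp only [cond_false, List.length_append, List.length_flatten, List.map_replicate,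
        List.sum_replicate, smul_eq_mul, reads_append, reads_flatten_replicate] at hh
      push_cast at hh
      obtain ⟨hl, hr, hrv⟩ := hh
      by_cases him : i = e j + m
      · have : t i = true := by rw [hti]; simp [ht, him]
        rw [this, cond_true]
        have hdi : d i = d' j + m * u.length := by rw [hd, him]; ring
        rw [hdi]
        refine ⟨?_, hrv⟩
        rw [show i + 1 = e (j + 1) by omega, hde, hl]
        ring
      · have : t i = false := by rw [hti]; simp [him]
        rw [this, cond_false]
        constructor
        · have hj' : J (i + 1) = j := hJ _ _ (by omega) (by omega)
          have : d (i + 1) = d' j + (i + 1 - e j) * u.length := by simp [d, hj']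
          rw [this, hd]
          ring
        · have := hr (i - e j).toNat (by omega)
          rw [show (((i - e j).toNat : ℕ) : ℤ) = i - e j by omega] at this
          rwa [hd]
    · have h3 := hT j ht
      have hi : i = e j := by omega
      have hh := h j
      rw [ht, cond_true] at hh
      have : t i = false := by rw [hti]; simp [ht]
      rw [this, cond_false, hi, hde, ← h3, hde]
      exact hh
  · intro j
    refine ⟨fun ht => ⟨by simp [t, hJe, ht], hT j ht⟩, fun ht => ⟨fun i hi => ?_, ?_, hF j ht⟩⟩
    · have := hF j ht
      have hj' : J (e j + i) = j := hJ _ _ (by omega) (by omega)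
      simp [t, hj', hi.ne]
    · have := hF j ht
      have hj' : J (e j + m) = j := hJ _ _ (by omega) (by omega)
      simp [t, hj', ht]
  · funext j
    exact (hde j).symm

/-! ### Renormalization of sequences with bounded discrepancy -/

/-- The counting function of the ones of `t` deviates from slope `β` by less than `1` between any
two positions; `F i` is the discrepancy (number of ones up to `i`) `- i * β`. Stating this through
`F` covers both the lower (floor) and the upper (ceiling) mechanical words of slope `β`. -/
def BalancedSeq (β : ℝ) (t : ℤ → Bool) : Prop :=
  ∃ F : ℤ → ℝ, (∀ i, F (i + 1) = F i + (bif t i then 1 else 0) - β) ∧ ∀ i j, F i - F j < 1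

/-- A balanced sequence of slope `β`, with `m + 1 = ⌊1/β⌋`, is a concatenation of `0^m 1` and `0`,
and the type sequence is balanced again, with slope `(1 - (m+1)β) / (1 - mβ)`. -/
lemma BalancedSeq.renormalize {β : ℝ} {t : ℤ → Bool} (ht : BalancedSeq β t) {m : ℕ} (hβ : 0 < β)
    (h1 : (m + 1) * β < 1) (h2 : 1 < (m + 2) * β) :
    ∃ e t', Groups m t e t' ∧ BalancedSeq ((1 - (m + 1) * β) / (1 - m * β)) t' := by
  obtain ⟨F, hF, hd⟩ := ht
  have hlow : ∀ (p : ℤ) (r : ℕ), F p - r * β ≤ F (p + r) := by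
    intro p r
    induction r with
    | zero => simp
    | succ r ih =>
      have h := hF (p + r)
      have h0 : (0 : ℝ) ≤ bif t (p + r) then 1 else 0 := by rcases t (p + r) <;> simp
      push_cast
      rw [← add_assoc]
      linarith
  have hzero : ∀ (p : ℤ) (r : ℕ), (∀ i : ℕ, i < r → t (p + i) = false) →
      F (p + r) = F p - r * β := by
    intro p r
    induction r with
    | zero => simp
    | succ r ih =>
      intro hz
      have h := hF (p + r)
      rw [hz r (by omega), cond_false, ih (fun i hi => hz i (by omega))] at h
      push_cast
      rw [← add_assoc]
      linarith
  -- two ones are at distance at least `m + 1`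
  have hsep : ∀ i i' : ℤ, t i = true → t i' = true → i < i' → i + m < i' := by
    intro i i' hi hi' hlt
    by_contra hc
    have a := hF i
    have b := hF i'
    rw [hi, cond_true] at a
    rw [hi', cond_true] at b
    have c := hlow (i + 1) (i' - i - 1).toNat
    rw [show i + 1 + (((i' - i - 1).toNat : ℕ) : ℤ) = i' by omega] at c
    have hle : (((i' - i - 1).toNat : ℕ) : ℝ) ≤ (m : ℝ) - 1 := by
      have : (((i' - i - 1).toNat : ℕ) : ℤ) ≤ (m : ℤ) - 1 := by omega
      exact_mod_cast this
    have := hd (i' + 1) i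
    nlinarith
  -- break points are the positions followed by `m` zeros
  let B : Type := {p : ℤ // ∀ i : ℕ, i < m → t (p + i) = false}
  let R : B → B → Prop := fun p q =>
    (t (p.1 + m) = true ∧ q.1 = p.1 + m + 1) ∨
      (t (p.1 + m) = false ∧ t p.1 = false ∧ q.1 = p.1 + 1)
  have hafter : ∀ i : ℤ, t i = true → ∀ k : ℕ, k < m → t (i + 1 + k) = false := by
    intro i hi k hk
    by_contra hc
    have := hsep i (i + 1 + k) hi (by simpa using hc) (by omega)
    omega
  obtain ⟨i₀, hi₀⟩ : ∃ i, t i = true := by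
    by_contra hc
    push Not at hc
    have := hzero 0 (m + 2) (fun i _ => by simpa using hc _)
    have h3 := hd 0 (0 + ((m + 2 : ℕ) : ℤ))
    rw [this] at h3
    push_cast at h3
    linarith
  have fw : ∀ x, ∃ y, R x y := by
    rintro ⟨p, hp⟩
    rcases hx : t (p + m) with _ | _
    · have hp1 : t p = false := by
        rcases Nat.eq_zero_or_pos m with h | h
        · simpa [h] using hx
        · simpa using hp 0 h
      refine ⟨⟨p + 1, fun i hi => ?_⟩, Or.inr ⟨hx, hp1, rfl⟩⟩
      by_cases him : i + 1 = m
      · rw [show p + 1 + (i : ℤ) = p + m by omega]; exact hx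
      · have := hp (i + 1) (by omega)
        push_cast at this
        rwa [show p + 1 + (i : ℤ) = p + (i + 1) by ring]
    · exact ⟨⟨p + m + 1, hafter _ hx⟩, Or.inl ⟨hx, rfl⟩⟩
  have bw : ∀ y, ∃ x, R x y := by
    rintro ⟨q, hq⟩
    rcases hx : t (q - 1) with _ | _
    · refine ⟨⟨q - 1, fun i hi => ?_⟩, Or.inr ⟨?_, hx, by simp⟩⟩
      · rcases i with _ | i
        · simpa using hx
        · have := hq i (by omega)
          rwa [show q - 1 + ((i + 1 : ℕ) : ℤ) = q + i by push_cast; ring]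
      · change t (q - 1 + m) = false
        rcases Nat.eq_zero_or_pos m with h | h
        · simpa [h] using hx
        · have := hq (m - 1) (by omega)
          rwa [show q - 1 + (m : ℤ) = q + ((m - 1 : ℕ) : ℤ) by omega]
    · refine ⟨⟨q - 1 - m, fun i hi => ?_⟩, Or.inl ⟨by simpa using hx, by simp⟩⟩
      by_contra hc
      have := hsep (q - 1 - m + i) (q - 1) (by simpa using hc) hx (by omega)
      omega
  obtain ⟨E, hE⟩ := exists_orbit R fw bw ⟨i₀ + 1, hafter i₀ hi₀⟩
  have hL : 0 < 1 - m * β := by linarith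
  have hL' := hL.ne'
  have hG : Groups m t (fun j => (E j).1) (fun j => !t ((E j).1 + m)) := by
    intro j
    rcases hE j with ⟨a, b⟩ | ⟨a, b, c⟩
    · simp only [a, b]
      exact ⟨by simp, fun _ => ⟨(E j).2, trivial, trivial⟩⟩
    · simp only [a, b, c]
      exact ⟨by simp, by simp⟩
  refine ⟨_, _, hG, fun j => -F (E j).1 / (1 - m * β), fun j => ?_, fun i j => ?_⟩
  · rcases hx : t ((E j).1 + m) with _ | _
    · have h3 := (hG j).1 (by simp [hx])
      have h4 := hF (E j).1
      simp only at h3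
      rw [h3.1, ← h3.2, cond_false] at h4
      simp only [hx, Bool.not_false, cond_true, h4]
      rw [div_add_one hL', ← sub_div]
      congr 1
      ring
    · have h3 := (hG j).2 (by simp [hx])
      have h4 := hF ((E j).1 + m)
      simp only at h3
      rw [h3.2.1, ← h3.2.2, cond_true, hzero _ _ h3.1] at h4
      simp only [hx, Bool.not_true, cond_false, h4]
      field_simp
      ring
  · -- a break point is followed by `m` zeros, along which `F` drops by `m * β`
    have h3 := hzero _ _ (E i).2
    have h4 := hd (E j).1 ((E i).1 + m)
    rw [h3] at h4
    rw [← sub_div, div_lt_one hL]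
    linarith

lemma sturmian_balanced (α θ : ℝ) (hα0 : 0 < α) (hα1 : α < 1) : BalancedSeq α (sturmian α θ) := by
  refine ⟨fun i => ⌊(i : ℝ) * α + θ⌋ - i * α, fun i => ?_, fun i j => ?_⟩
  · have h0 := Int.floor_add_fract ((i : ℝ) * α + θ)
    have h1 := Int.fract_nonneg ((i : ℝ) * α + θ)
    have h2 := Int.fract_lt_one ((i : ℝ) * α + θ)
    by_cases h : 1 - α ≤ Int.fract ((i : ℝ) * α + θ)
    · have : ⌊((i + 1 : ℤ) : ℝ) * α + θ⌋ = ⌊(i : ℝ) * α + θ⌋ + 1 := by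
        rw [Int.floor_eq_iff]
        push_cast
        constructor <;> linarith
      simp only [sturmian, this, h, if_true, cond_true]
      push_cast
      ring
    · have : ⌊((i + 1 : ℤ) : ℝ) * α + θ⌋ = ⌊(i : ℝ) * α + θ⌋ := by
        rw [Int.floor_eq_iff]
        push_cast
        push Not at h
        constructor <;> linarith
      simp only [sturmian, this, h, if_false, cond_false]
      push_cast
      ring
  · have h0 := Int.floor_le ((i : ℝ) * α + θ)
    have h1 := Int.lt_floor_add_one ((j : ℝ) * α + θ)
    linarith

/-! ### Continued fractions -/

/-- The exponent `m` in `s_{n+1} = s_n^m s_{n-1}`: it is `a₁ - 1` for `n = 0` and `a_{n+1}`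
otherwise. -/
noncomputable def swExp (α : ℝ) : ℕ → ℕ
  | 0 => cfa α 1 - 1
  | n + 1 => cfa α (n + 2)

lemma sw_add_two (α : ℝ) (n : ℕ) :
    sw α (n + 2) = (List.replicate (swExp α n) (sw α (n + 1))).flatten ++ sw α n := by
  cases n <;> simp [sw, swExp]

lemma sw_ne_nil (α : ℝ) (n : ℕ) : sw α n ≠ [] := by
  induction n using Nat.strong_induction_on with
  | _ n ih =>
    match n with
    | 0 => simp [sw]
    | 1 => simp [sw]
    | n + 2 =>
      rw [sw_add_two]
      exact List.append_ne_nil_of_right_ne_nil _ (ih n (by omega))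

/-- The slope of the type sequence of the `(n,α)`-partition: `α` for `n = 0`, and `x / (1 + x)`
with `x = Gⁿ α` (`G` the Gauss map) for `n ≥ 1`. -/
noncomputable def typeSlope (α : ℝ) : ℕ → ℝ
  | 0 => α
  | n + 1 => (fun x : ℝ => Int.fract x⁻¹)^[n + 1] α /
      (1 + (fun x : ℝ => Int.fract x⁻¹)^[n + 1] α)

lemma gauss_iterate (α : ℝ) (hα0 : 0 < α) (hα1 : α < 1) (hirr : Irrational α) (n : ℕ) :
    Irrational ((fun x : ℝ => Int.fract x⁻¹)^[n] α) ∧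
      0 < (fun x : ℝ => Int.fract x⁻¹)^[n] α ∧ (fun x : ℝ => Int.fract x⁻¹)^[n] α < 1 := by
  induction n with
  | zero => exact ⟨hirr, hα0, hα1⟩
  | succ n ih =>
    rw [Function.iterate_succ_apply']
    set x := (fun x : ℝ => Int.fract x⁻¹)^[n] α
    have hi : Irrational (Int.fract x⁻¹) := by
      have := ih.1.inv.sub_intCast ⌊x⁻¹⌋
      rwa [Int.self_sub_floor] at this
    exact ⟨hi, lt_of_le_of_ne (Int.fract_nonneg _) hi.ne_zero.symm, Int.fract_lt_one _⟩

/-- With `a = ⌊1/x⌋` one has `a x < 1 < (a+1) x` and the Gauss map sends `x` to `(1 - a x)/x`. -/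
lemma gauss_step {x : ℝ} (h0 : 0 < x) (h1 : x < 1) (hi : Irrational (Int.fract x⁻¹)) :
    1 ≤ ⌊x⁻¹⌋₊ ∧ (⌊x⁻¹⌋₊ : ℝ) * x < 1 ∧ 1 < ((⌊x⁻¹⌋₊ : ℝ) + 1) * x ∧
      Int.fract x⁻¹ = (1 - ⌊x⁻¹⌋₊ * x) / x := by
  have hx : x⁻¹ * x = 1 := inv_mul_cancel₀ h0.ne'
  have hfr : Int.fract x⁻¹ = x⁻¹ - ⌊x⁻¹⌋₊ := by
    rw [natCast_floor_eq_intCast_floor (inv_pos.mpr h0).le]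
    rfl
  have hpos : 0 < Int.fract x⁻¹ := lt_of_le_of_ne (Int.fract_nonneg _) hi.ne_zero.symm
  have hlt := Int.fract_lt_one x⁻¹
  refine ⟨?_, ?_, ?_, ?_⟩
  · rw [Nat.one_le_floor_iff]
    exact (one_le_inv₀ h0).mpr h1.le
  · rw [hfr] at hpos; nlinarith
  · rw [hfr] at hlt; nlinarith
  · rw [hfr]; field_simp

lemma slope_step (α : ℝ) (hα0 : 0 < α) (hα1 : α < 1) (hirr : Irrational α) (n : ℕ) :
    0 < typeSlope α n ∧ (swExp α n + 1) * typeSlope α n < 1 ∧ 1 < (swExp α n + 2) * typeSlope α n ∧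
      typeSlope α (n + 1) =
        (1 - (swExp α n + 1) * typeSlope α n) / (1 - swExp α n * typeSlope α n) := by
  obtain ⟨-, hx0, hx1⟩ := gauss_iterate α hα0 hα1 hirr n
  obtain ⟨hy, hy0, -⟩ := gauss_iterate α hα0 hα1 hirr (n + 1)
  have hs : typeSlope α (n + 1) = (fun x : ℝ => Int.fract x⁻¹)^[n + 1] α /
      (1 + (fun x : ℝ => Int.fract x⁻¹)^[n + 1] α) := rfl
  have hc : cfa α (n + 1) = ⌊((fun x : ℝ => Int.fract x⁻¹)^[n] α)⁻¹⌋₊ := rfl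
  rw [Function.iterate_succ_apply'] at hs hy hy0
  obtain ⟨g1, g2, g3, g4⟩ := gauss_step hx0 hx1 hy
  rw [← hc] at g1 g2 g3 g4
  cases n with
  | zero =>
    have hm : (swExp α 0 : ℝ) = cfa α 1 - 1 := by
      simp only [swExp]
      rw [Nat.cast_sub g1]
      simp
    rw [hs, hm]
    simp only [typeSlope, Function.iterate_zero, id, zero_add] at *
    rw [g4]
    refine ⟨hα0, by linarith, by linarith, ?_⟩
    have : 0 < 1 - ((cfa α 1 : ℝ) - 1) * α := by linarith
    have h3 : (0 : ℝ) < 1 + (1 - cfa α 1 * α) / α := by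
      have : 0 < (1 - cfa α 1 * α) / α := div_pos (by linarith) hα0
      linarith
    rw [div_eq_div_iff h3.ne' this.ne']
    field_simp
    ring
  | succ n =>
    have hm : swExp α (n + 1) = cfa α (n + 1 + 1) := rfl
    have hsn : typeSlope α (n + 1) = (fun x : ℝ => Int.fract x⁻¹)^[n + 1] α /
      (1 + (fun x : ℝ => Int.fract x⁻¹)^[n + 1] α) := rfl
    rw [hs, hm, hsn, g4]
    generalize (fun x : ℝ => Int.fract x⁻¹)^[n + 1] α = x at *
    generalize (cfa α (n + 1 + 1) : ℝ) = a at *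
    have hx : 0 < 1 + x := by linarith
    have e1 : 1 - a * (x / (1 + x)) = (1 + x - a * x) / (1 + x) := by field_simp
    have e2 : 1 - (a + 1) * (x / (1 + x)) = (1 - a * x) / (1 + x) := by field_simp; ring
    have e3 : 1 + (1 - a * x) / x = (1 + x - a * x) / x := by field_simp; ring
    have h5 : 0 < 1 + x - a * x := by linarith
    refine ⟨by positivity, ?_, ?_, ?_⟩
    · have : 0 < (1 - a * x) / (1 + x) := div_pos (by linarith) hx
      linarith
    · rw [← mul_div_assoc, lt_div_iff₀ hx]; linarith
    · rw [e1, e2, e3]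
      field_simp

/-! ### Existence and uniqueness up to a shift -/

lemma exists_factors (α : ℝ) (hα0 : 0 < α) (hα1 : α < 1) (hirr : Irrational α) (θ : ℝ) (n : ℕ) :
    ∃ d t, Factors (sw α (n + 1)) (sw α n) (sturmian α θ) d t ∧ BalancedSeq (typeSlope α n) t := by
  induction n with
  | zero =>
    refine ⟨id, sturmian α θ, fun j => ?_, sturmian_balanced α θ hα0 hα1⟩
    rcases h : sturmian α θ j <;> simp [sw, Reads, h]
  | succ n ih =>
    obtain ⟨d, t, hf, hb⟩ := ih
    obtain ⟨h0, h1, h2, h3⟩ := slope_step α hα0 hα1 hirr n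
    obtain ⟨e, t', hg, hb'⟩ := hb.renormalize h0 h1 h2
    refine ⟨d ∘ e, t', ?_, by rwa [h3]⟩
    have := hf.group hg
    rwa [← sw_add_two] at this

/-- Uniqueness holds for arbitrary sequences: the blocks `s_{n+1} = s_n^m s_{n-1}` are located by
the blocks `s_{n-1}` of the factorization one level below. -/
lemma factors_unique (α : ℝ) (f : ℤ → Bool) (n : ℕ) : ∀ d₁ t₁ d₂ t₂,
    Factors (sw α (n + 1)) (sw α n) f d₁ t₁ → Factors (sw α (n + 1)) (sw α n) f d₂ t₂ →
    ∃ c : ℤ, ∀ j, d₂ j = d₁ (j + c) ∧ t₂ j = t₁ (j + c) := by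
  induction n with
  | zero =>
    have key : ∀ d t, Factors (sw α 1) (sw α 0) f d t → ∀ j, d j = d 0 + j ∧ t j = f (d j) := by
      intro d t h j
      have hs : ∀ j, d (j + 1) = d j + 1 := by
        intro j
        have := (h j).1
        rcases ht : t j <;> simpa [ht, sw] using this
      constructor
      · induction j using Int.induction_on with
        | zero => simp
        | succ i ih => rw [hs, ih]; ring
        | pred i ih =>
          have := hs (-(i : ℤ) - 1)
          rw [sub_add_cancel] at this
          linarith
      · have := (h j).2
        rcases ht : t j <;> simp [ht, sw, Reads] at this <;> exact this.symm
    intro d₁ t₁ d₂ t₂ h₁ h₂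
    have hd : ∀ j, d₂ j = d₁ (j + (d₂ 0 - d₁ 0)) := by
      intro j
      rw [(key _ _ h₁ (j + (d₂ 0 - d₁ 0))).1, (key _ _ h₂ j).1]
      ring
    exact ⟨d₂ 0 - d₁ 0, fun j => ⟨hd j, by rw [(key _ _ h₁ _).2, (key _ _ h₂ _).2, hd j]⟩⟩
  | succ n ih =>
    intro d₁ t₁ d₂ t₂ h₁ h₂
    rw [show n + 1 + 1 = n + 2 from rfl, sw_add_two] at h₁ h₂
    obtain ⟨D₁, T₁, e₁, hf₁, hg₁, rfl⟩ := h₁.split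
    obtain ⟨D₂, T₂, e₂, hf₂, hg₂, rfl⟩ := h₂.split
    obtain ⟨c, hc⟩ := ih _ _ _ _ hf₁ hf₂
    have hg₂' : Groups (swExp α n) T₁ (fun j => e₂ j + c) t₂ := by
      intro j
      obtain ⟨a, b⟩ := hg₂ j
      simp only [(hc _).2] at a b
      refine ⟨fun h => ⟨(a h).1, by have := (a h).2; simp only; omega⟩, fun h => ?_⟩
      obtain ⟨b1, b2, b3⟩ := b h
      refine ⟨fun i hi => ?_, ?_, by simp only; omega⟩
      · rw [add_right_comm]; exact b1 i hi
      · rw [add_right_comm]; exact b2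
    obtain ⟨c', hc'⟩ := hg₁.unique hg₂'
    refine ⟨c', fun j => ⟨?_, (hc' j).2⟩⟩
    simp only [Function.comp_apply]
    rw [(hc _).1, (hc' j).1]

lemma IsNPartition.exists_factors {α : ℝ} {n : ℕ} {f d z} (h : IsNPartition α n f d z) :
    ∃ t : ℤ → Bool, (∀ j, z j = bif t j then sw α n else sw α (n + 1)) ∧
      Factors (sw α (n + 1)) (sw α n) f d t := by
  obtain ⟨-, -, hz, hd, hr⟩ := h
  have : ∀ j, ∃ b : Bool, z j = bif b then sw α n else sw α (n + 1) := fun j =>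
    (hz j).elim (fun h => ⟨false, h⟩) (fun h => ⟨true, h⟩)
  choose t ht using this
  refine ⟨t, ht, fun j => ?_⟩
  rw [← ht]
  exact ⟨hd j, (reads_iff _ _ _).mpr (hr j)⟩

/-- Existence and uniqueness of the `(n,α)`-partition of `v_{α,θ}` for every
`n ∈ ℕ₀` and every `θ ∈ [0,1)`. -/
theorem nPartition_existsUnique
    (α : ℝ) (hα0 : 0 < α) (hα1 : α < 1) (hirr : Irrational α)
    (n : ℕ) (θ : ℝ) (hθ0 : 0 ≤ θ) (hθ1 : θ < 1) :
    ∃! p : (ℤ → ℤ) × (ℤ → List Bool), IsNPartition α n (sturmian α θ) p.1 p.2 := by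
  have hu := sw_ne_nil α (n + 1)
  have hv := sw_ne_nil α n
  obtain ⟨d, t, hf, -⟩ := exists_factors α hα0 hα1 hirr θ n
  have hm := hf.strictMono hu hv
  obtain ⟨c, hc1, hc2⟩ := exists_index hm 0
  refine ⟨(fun j => d (j + c), fun j => bif t (j + c) then sw α n else sw α (n + 1)),
    ⟨?_, ?_, ?_, ?_, ?_⟩, ?_⟩
  · exact fun a b hab => hm (by omega)
  · simpa [add_comm] using And.intro hc1 hc2
  · intro j
    simp only
    rcases t (j + c) <;> simp
  · intro j
    simp only
    rw [add_right_comm]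
    exact (hf _).1
  · intro j
    exact (reads_iff _ _ _).mp (hf _).2
  · rintro ⟨d₂, z₂⟩ h₂
    obtain ⟨t₂, ht₂, hf₂⟩ := h₂.exists_factors
    obtain ⟨c', hc'⟩ := factors_unique α _ n _ _ _ _ hf hf₂
    obtain ⟨-, ⟨h3, h4⟩, -⟩ := h₂
    simp only at h3 h4 ht₂ hc'
    rw [(hc' _).1] at h3 h4
    have : c = c' := index_unique hm hc1 hc2 (by simpa using h3) (by simpa [add_comm] using h4)
    subst this
    refine Prod.ext (funext fun j => (hc' j).1) (funext fun j => ?_)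
    simp only
    rw [ht₂, (hc' j).2]
end
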